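/- arXiv:2603.21267 — 3 statements merged into one kernel-verified Lean document; each statement's English description precedes it below -/
import Mathlib

section
/- Let (C,p,Q) be a Brascamp–Lieb datum. Then BL(C,p,Q) < +∞ if and only if every linear subspace V ⊆ ℝⁿ satisfies dim V ≤ ∑_{j=1}^m p_j dim(C_j V). -/
open MeasureTheory Matrix Module
open scoped ENNReal

noncomputable section

/-- The regularized Brascamp–Lieb constant of a datum `(C, p, Q)`. -/
def BLconst {n m : ℕ} {ni : Fin m → ℕ} (C : ∀ i, Matrix (Fin (ni i)) (Fin n) ℝ)
    (p : Fin m → ℝ) (Q : ∀ i, Matrix (Fin (ni i)) (Fin (ni i)) ℝ) : ℝ≥0∞ :=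
  ⨆ (B : ∀ i, Matrix (Fin (ni i)) (Fin (ni i)) ℝ)
    (_ : ∀ i, (B i).PosDef ∧ (Q i - B i).PosSemidef),
    ((∏ i, ENNReal.ofReal ((B i).det) ^ p i) /
        ENNReal.ofReal ((∑ i, p i • ((C i)ᵀ * B i * C i)).det)) ^ ((2 : ℝ)⁻¹)

/-!
Necessity: contracting each `Qᵢ` by a factor `t` along `Cᵢ V` multiplies `∏ᵢ det(Qᵢ)^pᵢ` by
`t ^ ∑ᵢ pᵢ dim (Cᵢ V)`, while Hadamard's inequality in a basis adapted to `V` bounds the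
determinant in the denominator by a multiple of `t ^ dim V`. Let `t → 0`.

Sufficiency: list an orthonormal eigenbasis of `∑ᵢ pᵢ Cᵢᵀ Bᵢ Cᵢ` by increasing eigenvalue and, for
each `i`, select greedily the eigenvectors whose images under `Cᵢ` form a basis. Hadamard's
inequality bounds `det Bᵢ` by a multiple of the product of the selected eigenvalues. The dimension
inequalities for the spans of initial segments of the eigenbasis say that small eigenvalues are
selected, with weights `pᵢ`, at least as often as they occur in the spectrum, so Abel summation of
the logarithms compares the selected product with the determinant; the surplus is controlled
because `Bᵢ ≤ Qᵢ` bounds all eigenvalues from above. Compactness of the orthogonal group makes the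
constants independent of the eigenbasis.
-/

theorem posSemidef_transpose_mul_mul_same {d e : Type*} [Fintype d] [Finite e] {A : Matrix d d ℝ}
    (hA : A.PosSemidef) (B : Matrix d e ℝ) : (Bᵀ * A * B).PosSemidef := by
  simpa only [conjTranspose_eq_transpose_of_trivial] using hA.conjTranspose_mul_mul_same B

section Hadamard

variable {d : Type*} [Fintype d]

theorem prod_le_sum_div_card_pow {x : d → ℝ} (hx : ∀ k, 0 ≤ x k) :
    ∏ k, x k ≤ ((∑ k, x k) / Fintype.card d) ^ Fintype.card d := by
  rcases isEmpty_or_nonempty d with hd | hd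
  · simp
  have hcard : (Fintype.card d : ℝ) ≠ 0 := Nat.cast_ne_zero.2 Fintype.card_ne_zero
  have hprod : 0 ≤ ∏ k, x k := Finset.prod_nonneg fun k _ => hx k
  have amgm := Real.geom_mean_le_arith_mean Finset.univ (fun _ => 1) x
    (fun _ _ => zero_le_one) (by simp [Fintype.card_pos]) fun k _ => hx k
  simp only [Real.rpow_one, one_mul, Finset.sum_const, Finset.card_univ, nsmul_eq_mul,
    mul_one] at amgm
  calc ∏ k, x k = ((∏ k, x k) ^ (Fintype.card d : ℝ)⁻¹) ^ Fintype.card d := by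
        rw [← Real.rpow_natCast, ← Real.rpow_mul hprod, inv_mul_cancel₀ hcard, Real.rpow_one]
    _ ≤ _ := pow_le_pow_left₀ (Real.rpow_nonneg hprod _) amgm _

variable [DecidableEq d]

theorem det_le_trace_div_card_pow {A : Matrix d d ℝ} (hA : A.PosSemidef) :
    A.det ≤ (A.trace / Fintype.card d) ^ Fintype.card d := by
  rw [hA.1.det_eq_prod_eigenvalues, hA.1.trace_eq_sum_eigenvalues]
  exact prod_le_sum_div_card_pow hA.eigenvalues_nonneg

theorem det_le_prod_diag {A : Matrix d d ℝ} (hA : A.PosSemidef) : A.det ≤ ∏ k, A k k := by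
  by_cases hdet : A.det = 0
  · exact hdet.trans_le (Finset.prod_nonneg fun k _ => hA.diag_nonneg)
  have hdiag : ∀ k, 0 < A k k := fun k => (hA.posDef_iff_det_ne_zero.2 hdet).diag_pos
  -- rescale to unit diagonal, where the trace bound gives determinant at most one
  let s : d → ℝ := fun k => (√(A k k))⁻¹
  have hs : ∀ k, s k * s k = (A k k)⁻¹ := fun k => by
    rw [← mul_inv, Real.mul_self_sqrt (hdiag k).le]
  let A' : Matrix d d ℝ := diagonal s * A * diagonal s
  have hA' : A'.PosSemidef := by
    simpa only [diagonal_transpose] using posSemidef_transpose_mul_mul_same hA (diagonal s)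
  have htrace : A'.trace = Fintype.card d := by
    have hunit : ∀ k, A' k k = 1 := fun k => by
      simp only [A', mul_diagonal, diagonal_mul]
      rw [mul_right_comm, hs, inv_mul_cancel₀ (hdiag k).ne']
    simp [trace, hunit]
  have hdetA' : A'.det * ∏ k, A k k = A.det := by
    have hss : (∏ k, s k) * (∏ k, s k) * ∏ k, A k k = 1 := by
      rw [← Finset.prod_mul_distrib, ← Finset.prod_mul_distrib]
      exact Finset.prod_eq_one fun k _ => by rw [hs, inv_mul_cancel₀ (hdiag k).ne']
    simp only [A', det_mul, det_diagonal]
    linear_combination A.det * hss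
  have hle : A'.det ≤ 1 := by
    refine (det_le_trace_div_card_pow hA').trans (pow_le_one₀ ?_ ?_) <;> rw [htrace]
    · positivity
    · exact div_self_le_one _
  rw [← hdetA']
  exact mul_le_of_le_one_left (Finset.prod_nonneg fun k _ => (hdiag k).le) hle

theorem det_mul_det_sq_le_prod_dotProduct {A : Matrix d d ℝ} (hA : A.PosSemidef)
    (v : d → d → ℝ) : A.det * (of v).det ^ 2 ≤ ∏ k, v k ⬝ᵥ A *ᵥ v k := by
  calc A.det * (of v).det ^ 2 = (of v * A * (of v)ᵀ).det := by
        rw [det_mul, det_mul, det_transpose]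
        ring
    _ ≤ ∏ k, (of v * A * (of v)ᵀ) k k := det_le_prod_diag (hA.mul_mul_conjTranspose_same (of v))
    _ = ∏ k, v k ⬝ᵥ A *ᵥ v k := Finset.prod_congr rfl fun k _ => by
        rw [dotProduct_mulVec]
        rfl

end Hadamard

section Contraction

theorem det_one_sub_smul_projection {K E : Type*} [Field K] [AddCommGroup E] [Module K E]
    [FiniteDimensional K E] {W W' : Submodule K E} (h : IsCompl W W') (c : K) :
    LinearMap.det (1 - c • W.projection W' h) = (1 - c) ^ finrank K W := by
  have hconj : 1 - c • W.projection W' h =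
      (W.prodEquivOfIsCompl W' h : (W × W') →ₗ[K] E) ∘ₗ
        LinearMap.prodMap ((1 - c) • LinearMap.id) LinearMap.id ∘ₗ
        ((W.prodEquivOfIsCompl W' h).symm : E →ₗ[K] (W × W')) := by
    refine LinearMap.ext fun x => ?_
    obtain ⟨⟨a, b⟩, rfl⟩ := (W.prodEquivOfIsCompl W' h).surjective x
    simp [sub_smul, sub_add_eq_add_sub]
  rw [hconj, LinearMap.det_conj, LinearMap.det_prodMap, LinearMap.det_smul, LinearMap.det_id,
    LinearMap.det_id, mul_one, mul_one]

variable {d : Type*} [Fintype d] [DecidableEq d] {Q : Matrix d d ℝ}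

theorem isCompl_orthogonal_toBilin'_of_posDef (hQ : Q.PosDef) (W : Submodule ℝ (d → ℝ)) :
    IsCompl W (Q.toBilin'.orthogonal W) := by
  have hsymm : Q.toBilin'.IsSymm := isSymm_toBilin'_iff_isSymm.2 hQ.1
  rw [LinearMap.BilinForm.isCompl_orthogonal_iff_disjoint hsymm.isRefl, Submodule.disjoint_def]
  intro x hxW hx
  by_contra hne
  have hpos := hQ.dotProduct_mulVec_pos hne
  rw [star_trivial, ← toBilin'_apply'] at hpos
  exact hpos.ne' (hx x hxW)

theorem exists_orthogonal_projection_of_posDef (hQ : Q.PosDef) (W : Submodule ℝ (d → ℝ)) :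
    ∃ P : Matrix d d ℝ, Pᵀ * Q * P = Pᵀ * Q ∧ (∀ x ∈ W, P *ᵥ x = x) ∧
      ∀ c : ℝ, (1 - c • P).det = (1 - c) ^ finrank ℝ W := by
  have hcompl := isCompl_orthogonal_toBilin'_of_posDef hQ W
  obtain ⟨P, hP⟩ : ∃ P : Matrix d d ℝ, P.toLin' = W.projection _ hcompl :=
    toLin'.surjective _
  have hPx : ∀ x, P *ᵥ x = W.projection _ hcompl x := fun x => by rw [← hP, toLin'_apply]
  have horth : Pᵀ * Q * (1 - P) = 0 := by
    ext i j
    have hij : Q.toBilin' (P *ᵥ Pi.single i 1) ((1 - P) *ᵥ Pi.single j 1) = 0 := by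
      rw [sub_mulVec, one_mulVec, hPx, hPx]
      exact Submodule.sub_projection_mem hcompl _ _ (Submodule.projection_apply_mem hcompl _)
    rw [toBilin'_apply', mulVec_mulVec, ← vecMul_transpose, ← dotProduct_mulVec, mulVec_mulVec,
      ← Matrix.mul_assoc] at hij
    simpa using hij
  refine ⟨P, ?_, fun x hx => ?_, fun c => ?_⟩
  · rwa [Matrix.mul_sub, Matrix.mul_one, sub_eq_zero, eq_comm] at horth
  · rw [hPx]
    exact Submodule.projection_apply_of_mem_left hcompl hx
  · rw [← det_one_sub_smul_projection hcompl, ← hP, ← LinearMap.det_toLin', map_sub, map_smul,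
      toLin'_one]
    rfl

theorem exists_posDef_contraction (hQ : Q.PosDef) (W : Submodule ℝ (d → ℝ)) {t : ℝ}
    (ht0 : 0 < t) (ht1 : t ≤ 1) :
    ∃ B : Matrix d d ℝ, B.PosDef ∧ (Q - B).PosSemidef ∧ B.det = Q.det * t ^ finrank ℝ W ∧
      ∀ x ∈ W, B *ᵥ x = t • Q *ᵥ x := by
  obtain ⟨P, hQP, hPW, hdet⟩ := exists_orthogonal_projection_of_posDef hQ W
  have hPQ : Pᵀ * Q = Q * P := by
    have hQT : Qᵀ = Q := hQ.1
    calc Pᵀ * Q = (Pᵀ * Q * P)ᵀ := by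
          rw [transpose_mul, transpose_mul, transpose_transpose, hQT, ← Matrix.mul_assoc, hQP]
      _ = Q * P := by rw [hQP, transpose_mul, transpose_transpose, hQT]
  have hQPP : Q * P * P = Q * P := by rw [← hPQ, hQP]
  have hcompl : (1 - P)ᵀ * Q * (1 - P) = Q - Q * P := by
    simp only [transpose_sub, transpose_one, Matrix.sub_mul, Matrix.mul_sub, Matrix.one_mul,
      Matrix.mul_one, hPQ, hQPP, sub_self, sub_zero]
  refine ⟨Q * (1 - (1 - t) • P), ?_, ?_, ?_, fun x hx => ?_⟩
  · have hB : Q * (1 - (1 - t) • P) = t • Q + (1 - t) • ((1 - P)ᵀ * Q * (1 - P)) := by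
      rw [hcompl, Matrix.mul_sub, Matrix.mul_one, Matrix.mul_smul]
      module
    rw [hB]
    exact (hQ.smul ht0).add_posSemidef
      ((posSemidef_transpose_mul_mul_same hQ.posSemidef (1 - P)).smul (sub_nonneg.2 ht1))
  · have hQB : Q - Q * (1 - (1 - t) • P) = (1 - t) • (Pᵀ * Q * P) := by
      rw [hQP, hPQ, Matrix.mul_sub, Matrix.mul_one, Matrix.mul_smul, sub_sub_cancel]
    rw [hQB]
    exact (posSemidef_transpose_mul_mul_same hQ.posSemidef P).smul (sub_nonneg.2 ht1)
  · rw [det_mul, hdet, sub_sub_cancel]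
  · rw [← mulVec_mulVec, sub_mulVec, one_mulVec, smul_mulVec, hPW x hx, ← mulVec_smul]
    congr 1
    module

end Contraction

section LinearAlgebra

theorem exists_basis_of_submodule {K E d : Type*} [Field K] [AddCommGroup E] [Module K E]
    [FiniteDimensional K E] (b : Basis d K E) (V : Submodule K E) :
    ∃ (b' : Basis d K E) (s : Finset d), s.card = finrank K V ∧ ∀ k ∈ s, b' k ∈ V := by
  obtain ⟨W, hW⟩ := V.exists_isCompl
  let bV := ((finBasis K V).prod (finBasis K W)).map (V.prodEquivOfIsCompl W hW)
  let e := bV.indexEquiv b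
  refine ⟨bV.reindex e, Finset.univ.map (Function.Embedding.inl.trans e.toEmbedding), by simp, ?_⟩
  simp [bV]

end LinearAlgebra

section GreedyBasis

variable {ι K E : Type*} [LinearOrder ι] [Field K] [AddCommGroup E] [Module K E]

/-- The indices retained when a family is scanned in increasing order and every vector lying in
the span of its predecessors is discarded. -/
def greedyIndices (K : Type*) {ι E : Type*} [LinearOrder ι] [Field K] [AddCommGroup E] [Module K E]
    (v : ι → E) : Set ι :=
  {j | v j ∉ Submodule.span K (v '' Set.Iio j)}

theorem linearIndepOn_greedyIndices (v : ι → E) : LinearIndepOn K v (greedyIndices K v) := by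
  rw [linearIndepOn_iff_linearIndepOn_finset]
  intro s
  induction s using Finset.induction_on_max with
  | empty => simp
  | insert a s has ih =>
    intro hs
    rw [Finset.coe_insert, Set.insert_subset_iff] at hs
    rw [Finset.coe_insert]
    refine (ih hs.2).insert fun ha => hs.1 ?_
    exact Submodule.span_mono (Set.image_mono fun x hx => has x hx) ha

theorem span_image_greedyIndices_inter_Iic [WellFoundedLT ι] (v : ι → E) (j : ι) :
    Submodule.span K (v '' (greedyIndices K v ∩ Set.Iic j)) =
      Submodule.span K (v '' Set.Iic j) := by
  have hmono {i j : ι} (hij : i ≤ j) : Submodule.span K (v '' (greedyIndices K v ∩ Set.Iic i)) ≤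
      Submodule.span K (v '' (greedyIndices K v ∩ Set.Iic j)) :=
    Submodule.span_mono (Set.image_mono (Set.inter_subset_inter_right _ (Set.Iic_subset_Iic.2 hij)))
  have hmem : ∀ j, v j ∈ Submodule.span K (v '' (greedyIndices K v ∩ Set.Iic j)) := by
    intro j
    induction j using WellFoundedLT.induction with
    | ind j ih =>
      by_cases hj : j ∈ greedyIndices K v
      · exact Submodule.subset_span ⟨j, ⟨hj, Set.self_mem_Iic⟩, rfl⟩
      · refine Submodule.span_le.2 ?_ (not_not.1 hj)
        rintro _ ⟨i, hi, rfl⟩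
        exact hmono hi.le (ih i hi)
  refine le_antisymm (Submodule.span_mono (Set.image_mono Set.inter_subset_right)) ?_
  rw [Submodule.span_le]
  rintro _ ⟨i, hi, rfl⟩
  exact hmono hi (hmem i)

theorem span_image_greedyIndices [WellFoundedLT ι] (v : ι → E) :
    Submodule.span K (v '' greedyIndices K v) = Submodule.span K (Set.range v) := by
  refine le_antisymm (Submodule.span_mono (Set.image_subset_range _ _)) ?_
  rw [Submodule.span_le]
  rintro _ ⟨j, rfl⟩
  have hj : v j ∈ Submodule.span K (v '' Set.Iic j) :=
    Submodule.subset_span ⟨j, Set.self_mem_Iic, rfl⟩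
  rw [← span_image_greedyIndices_inter_Iic] at hj
  exact Submodule.span_mono (Set.image_mono Set.inter_subset_left) hj

theorem exists_linearIndependent_comp_finrank_span_Iic_le [WellFoundedLT ι] {κ : Type*} [Fintype κ]
    (b : Basis κ K E) {v : ι → E} (hv : Submodule.span K (Set.range v) = ⊤) :
    ∃ f : κ → ι, LinearIndependent K (v ∘ f) ∧
      ∀ j, finrank K (Submodule.span K (v '' Set.Iic j)) ≤ Finset.card {l | f l ≤ j} := by
  classical
  have hspan : ⊤ ≤ Submodule.span K (Set.range fun j : greedyIndices K v => v j) := by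
    rw [← Set.image_eq_range, span_image_greedyIndices, hv]
  let e := b.indexEquiv (Basis.mk (linearIndepOn_greedyIndices v) hspan)
  refine ⟨fun l => e l, (linearIndepOn_greedyIndices v).comp e e.injective, fun j => ?_⟩
  have himage : v '' (greedyIndices K v ∩ Set.Iic j) =
      ((Finset.univ.filter fun l => (e l : ι) ≤ j).image fun l => v (e l) : Finset E) := by
    ext x
    simp only [Set.mem_image, Set.mem_inter_iff, Set.mem_Iic, Finset.coe_image, Finset.coe_filter,
      Finset.mem_univ, true_and, Set.mem_ofPred_eq]
    constructor
    · rintro ⟨i, ⟨hi, hij⟩, rfl⟩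
      exact ⟨e.symm ⟨i, hi⟩, by simpa using hij, by simp⟩
    · rintro ⟨l, hl, rfl⟩
      exact ⟨e l, ⟨(e l).2, hl⟩, rfl⟩
  rw [← span_image_greedyIndices_inter_Iic, himage]
  exact (finrank_span_finset_le_card _).trans Finset.card_image_le

end GreedyBasis

section Majorization

theorem sum_mul_le_mul_sum_of_monotoneOn {α R : Type*} [LinearOrder α] [CommRing R] [LinearOrder R]
    [IsStrictOrderedRing R] {s : Finset α} {a x : α → R} {L : R} (hx : MonotoneOn x s)
    (hL : ∀ k ∈ s, x k ≤ L) (ha : ∀ k ∈ s, 0 ≤ ∑ j ∈ s with j ≤ k, a j) :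
    ∑ k ∈ s, a k * x k ≤ L * ∑ k ∈ s, a k := by
  induction s using Finset.induction_on_max generalizing L with
  | empty => simp
  | insert M s hM ih =>
    have hMs : M ∉ s := fun h => (hM M h).false
    have hinit : ∀ k ∈ s, ({j ∈ insert M s | j ≤ k} : Finset α) = {j ∈ s | j ≤ k} := fun k hk => by
      rw [Finset.filter_insert, if_neg (hM k hk).not_ge]
    have htotal : 0 ≤ ∑ k ∈ insert M s, a k := by
      have hall : ({j ∈ insert M s | j ≤ M} : Finset α) = insert M s :=
        Finset.filter_true_of_mem fun j hj =>
          (Finset.mem_insert.1 hj).elim (fun h => h.le) fun h => (hM j h).le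
      simpa only [hall] using ha M (Finset.mem_insert_self M s)
    have hs : ∑ k ∈ s, a k * x k ≤ x M * ∑ k ∈ s, a k :=
      ih (hx.mono (Finset.coe_subset.2 (Finset.subset_insert M s)))
        (fun k hk => hx (by simp [hk]) (by simp) (hM k hk).le)
        fun k hk => by simpa only [hinit k hk] using ha k (Finset.mem_insert_of_mem hk)
    calc ∑ k ∈ insert M s, a k * x k = a M * x M + ∑ k ∈ s, a k * x k := Finset.sum_insert hMs
      _ ≤ a M * x M + x M * ∑ k ∈ s, a k := by gcongr
      _ = x M * ∑ k ∈ insert M s, a k := by rw [Finset.sum_insert hMs]; ring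
      _ ≤ L * ∑ k ∈ insert M s, a k :=
        mul_le_mul_of_nonneg_right (hL M (Finset.mem_insert_self M s)) htotal

variable {ι d : Type*} {κ : ι → Type*} [Fintype ι] [∀ i, Fintype (κ i)] [Fintype d]
  [LinearOrder d] {p : ι → ℝ} {f : ∀ i, κ i → d}

/-- Counting the values of each `f i` with weight `p i`, every initial segment of `d` receives at
least its cardinality. -/
def CoversInitialSegments (p : ι → ℝ) (f : ∀ i, κ i → d) : Prop :=
  ∀ k, (Finset.card {j | j ≤ k} : ℝ) ≤ ∑ i, p i * (Finset.card {l | f i l ≤ k} : ℝ)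

theorem CoversInitialSegments.sum_mul_sum_comp_sub_sum_le (hf : CoversInitialSegments p f)
    {x : d → ℝ} (hx : Monotone x) {L : ℝ} (hL : ∀ k, x k ≤ L) :
    ∑ i, p i * ∑ l, x (f i l) - ∑ k, x k ≤
      L * (∑ i, p i * Fintype.card (κ i) - Fintype.card d) := by
  let a : d → ℝ := fun k => ∑ i, p i * (Finset.card {l | f i l = k} : ℝ) - 1
  have hpair (s : Finset d) (y : d → ℝ) :
      ∑ k ∈ s, a k * y k = ∑ i, p i * ∑ l with f i l ∈ s, y (f i l) - ∑ k ∈ s, y k := by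
    have hfiber (i : ι) (k : d) :
        (Finset.card {l | f i l = k} : ℝ) * y k = ∑ l with f i l = k, y (f i l) := by
      rw [Finset.sum_congr rfl fun l hl => congrArg y (Finset.mem_filter.1 hl).2,
        Finset.sum_const, nsmul_eq_mul]
    simp only [a, sub_mul, one_mul, Finset.sum_sub_distrib, Finset.sum_mul, mul_assoc, hfiber]
    rw [Finset.sum_comm]
    simp only [← Finset.mul_sum, Finset.sum_fiberwise_eq_sum_filter]
  have hsum (s : Finset d) :
      ∑ k ∈ s, a k = ∑ i, p i * (Finset.card {l | f i l ∈ s} : ℝ) - s.card := by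
    simpa using hpair s 1
  have habel := sum_mul_le_mul_sum_of_monotoneOn (s := Finset.univ) (a := a) (hx.monotoneOn _)
    (fun k _ => hL k) fun k _ => by
      rw [hsum]
      simpa using hf k
  rw [hpair, hsum] at habel
  simpa using habel

theorem CoversInitialSegments.prod_rpow_prod_comp_le (hf : CoversInitialSegments p f)
    {μ : d → ℝ} (hμ : Monotone μ) (hpos : ∀ k, 0 < μ k) {T : ℝ} (hT : 0 < T) (hμT : ∀ k, μ k ≤ T) :
    ∏ i, (∏ l, μ (f i l)) ^ p i ≤
      T ^ (∑ i, p i * Fintype.card (κ i) - Fintype.card d) * ∏ k, μ k := by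
  have hprod (i : ι) : 0 < ∏ l, μ (f i l) := Finset.prod_pos fun l _ => hpos _
  have hlog := hf.sum_mul_sum_comp_sub_sum_le (x := fun k => Real.log (μ k))
    (fun _ _ hij => Real.log_le_log (hpos _) (hμ hij)) fun k => Real.log_le_log (hpos k) (hμT k)
  rw [← Real.log_le_log_iff (Finset.prod_pos fun i _ => Real.rpow_pos_of_pos (hprod i) _)
    (mul_pos (Real.rpow_pos_of_pos hT _) (Finset.prod_pos fun k _ => hpos k)),
    Real.log_mul (Real.rpow_pos_of_pos hT _).ne' (Finset.prod_pos fun k _ => hpos k).ne',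
    Real.log_rpow hT, Real.log_prod fun i _ => (Real.rpow_pos_of_pos (hprod i) _).ne',
    Real.log_prod fun k _ => (hpos k).ne']
  simp only [Real.log_rpow (hprod _), Real.log_prod fun l _ => (hpos (f _ l)).ne']
  linarith

end Majorization

theorem ofReal_prod_rpow_div_rpow_inv_two_le_iff {ι : Type*} [Fintype ι] {p a : ι → ℝ} {D K : ℝ}
    (ha : ∀ i, 0 < a i) (hD : 0 < D) (hK : 0 ≤ K) :
    ((∏ i, ENNReal.ofReal (a i) ^ p i) / ENNReal.ofReal D) ^ ((2 : ℝ)⁻¹) ≤ ENNReal.ofReal K ↔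
      ∏ i, a i ^ p i ≤ K ^ 2 * D := by
  have hprod : ∏ i, ENNReal.ofReal (a i) ^ p i = ENNReal.ofReal (∏ i, a i ^ p i) := by
    rw [ENNReal.ofReal_prod_of_nonneg fun i _ => Real.rpow_nonneg (ha i).le _]
    exact Finset.prod_congr rfl fun i _ => ENNReal.ofReal_rpow_of_pos (ha i)
  have hK2 : ENNReal.ofReal K ^ (2 : ℝ) = ENNReal.ofReal (K ^ 2) := by
    rw [ENNReal.rpow_two, ENNReal.ofReal_pow hK]
  rw [ENNReal.rpow_inv_le_iff two_pos, hprod, hK2, ← ENNReal.ofReal_div_of_pos hD,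
    ENNReal.ofReal_le_ofReal_iff (sq_nonneg K), div_le_iff₀ hD]

section BrascampLieb

variable {ι d : Type*} {κ : ι → Type*} [Fintype ι] [∀ i, Fintype (κ i)]
  {C : ∀ i, Matrix (κ i) d ℝ} {p : ι → ℝ} {B Q : ∀ i, Matrix (κ i) (κ i) ℝ}

/-- The matrix `∑ᵢ pᵢ Cᵢᵀ Bᵢ Cᵢ` whose determinant is the denominator in the Brascamp–Lieb
constant. -/
def blMatrix (C : ∀ i, Matrix (κ i) d ℝ) (p : ι → ℝ) (B : ∀ i, Matrix (κ i) (κ i) ℝ) :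
    Matrix d d ℝ :=
  ∑ i, p i • ((C i)ᵀ * B i * C i)

theorem posSemidef_blMatrix [Finite d] (hp : ∀ i, 0 ≤ p i) (hB : ∀ i, (B i).PosSemidef) :
    (blMatrix C p B).PosSemidef :=
  posSemidef_sum _ fun i _ => (posSemidef_transpose_mul_mul_same (hB i) (C i)).smul (hp i)

theorem posSemidef_blMatrix_sub_blMatrix [Finite d] (hp : ∀ i, 0 ≤ p i)
    (hBQ : ∀ i, (Q i - B i).PosSemidef) : (blMatrix C p Q - blMatrix C p B).PosSemidef := by
  have hsub : blMatrix C p Q - blMatrix C p B = blMatrix C p fun i => Q i - B i := by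
    simp only [blMatrix, ← Finset.sum_sub_distrib, ← smul_sub, ← Matrix.sub_mul, ← Matrix.mul_sub]
  rw [hsub]
  exact posSemidef_blMatrix hp hBQ

variable [Fintype d]

/-- The dimension inequalities `dim V ≤ ∑ⱼ pⱼ dim (Cⱼ V)` over all subspaces `V`. -/
def DimensionCondition (C : ∀ i, Matrix (κ i) d ℝ) (p : ι → ℝ) : Prop :=
  ∀ V : Submodule ℝ (d → ℝ),
    (finrank ℝ V : ℝ) ≤ ∑ j, p j * (finrank ℝ (V.map (C j).mulVecLin) : ℝ)

theorem dotProduct_blMatrix_mulVec (x : d → ℝ) :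
    x ⬝ᵥ blMatrix C p B *ᵥ x = ∑ i, p i * ((C i *ᵥ x) ⬝ᵥ B i *ᵥ (C i *ᵥ x)) := by
  rw [blMatrix, sum_mulVec, dotProduct_sum]
  refine Finset.sum_congr rfl fun i _ => ?_
  rw [smul_mulVec, dotProduct_smul, smul_eq_mul, ← mulVec_mulVec, ← mulVec_mulVec,
    dotProduct_mulVec, vecMul_transpose]

theorem posDef_blMatrix (hker : ∀ x, (∀ i, C i *ᵥ x = 0) → x = 0) (hp : ∀ i, 0 < p i)
    (hB : ∀ i, (B i).PosDef) : (blMatrix C p B).PosDef := by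
  have hpsd := posSemidef_blMatrix (C := C) (fun i => (hp i).le) fun i => (hB i).posSemidef
  refine .of_dotProduct_mulVec_pos hpsd.1 fun x hx => ?_
  obtain ⟨i, hi⟩ : ∃ i, C i *ᵥ x ≠ 0 := by
    by_contra! h
    exact hx (hker x h)
  rw [star_trivial, dotProduct_blMatrix_mulVec]
  refine Finset.sum_pos' (fun j _ => mul_nonneg (hp j).le ?_)
    ⟨i, Finset.mem_univ i, mul_pos (hp i) ?_⟩
  · simpa only [star_trivial] using (hB j).posSemidef.dotProduct_mulVec_nonneg (C j *ᵥ x)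
  · simpa only [star_trivial] using (hB i).dotProduct_mulVec_pos hi

theorem trace_blMatrix_le (hp : ∀ i, 0 ≤ p i) (hBQ : ∀ i, (Q i - B i).PosSemidef) :
    (blMatrix C p B).trace ≤ (blMatrix C p Q).trace := by
  simpa only [trace_sub, sub_nonneg] using (posSemidef_blMatrix_sub_blMatrix hp hBQ).trace_nonneg

variable [DecidableEq d] [∀ i, DecidableEq (κ i)]

/-- The inequality `∏ᵢ det(Bᵢ)^pᵢ ≤ K det(∑ᵢ pᵢ Cᵢᵀ Bᵢ Cᵢ)` for all `0 < Bᵢ ≤ Qᵢ`, in which the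
square root of the Brascamp–Lieb constant has been removed. -/
def DetInequality (C : ∀ i, Matrix (κ i) d ℝ) (p : ι → ℝ) (Q : ∀ i, Matrix (κ i) (κ i) ℝ)
    (K : ℝ) : Prop :=
  ∀ B : ∀ i, Matrix (κ i) (κ i) ℝ, (∀ i, (B i).PosDef ∧ (Q i - B i).PosSemidef) →
    ∏ i, (B i).det ^ p i ≤ K * (blMatrix C p B).det

theorem BLconst_lt_top_iff_exists_detInequality {n m : ℕ} {ni : Fin m → ℕ}
    {C : ∀ i, Matrix (Fin (ni i)) (Fin n) ℝ} (hker : ∀ x, (∀ i, C i *ᵥ x = 0) → x = 0)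
    {p : Fin m → ℝ} (hp : ∀ i, 0 < p i) (Q : ∀ i, Matrix (Fin (ni i)) (Fin (ni i)) ℝ) :
    BLconst C p Q < ⊤ ↔ ∃ K, 0 ≤ K ∧ DetInequality C p Q K := by
  have hle {K : ℝ} (hK : 0 ≤ K) :
      BLconst C p Q ≤ ENNReal.ofReal K ↔ DetInequality C p Q (K ^ 2) :=
    iSup₂_le_iff.trans <| forall₂_congr fun B hB =>
      ofReal_prod_rpow_div_rpow_inv_two_le_iff (fun i => (hB i).1.det_pos)
        (posDef_blMatrix hker hp fun i => (hB i).1).det_pos hK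
  constructor
  · intro hfin
    exact ⟨(BLconst C p Q).toReal ^ 2, sq_nonneg _,
      (hle ENNReal.toReal_nonneg).1 (ENNReal.ofReal_toReal hfin.ne).ge⟩
  · rintro ⟨K, hK, h⟩
    rw [← Real.sq_sqrt hK] at h
    exact ((hle (Real.sqrt_nonneg K)).2 h).trans_lt ENNReal.ofReal_lt_top

end BrascampLieb

section Necessity

theorem le_of_forall_rpow_le_mul_rpow {a b q K : ℝ} (hq : 0 < q)
    (h : ∀ t : ℝ, 0 < t → t ≤ 1 → q * t ^ a ≤ K * t ^ b) : b ≤ a := by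
  by_contra! hab
  have hlim : Filter.Tendsto (fun t : ℝ => K * t ^ (b - a)) (nhdsWithin 0 (Set.Ioi 0))
      (nhds (K * 0 ^ (b - a))) :=
    ((Real.continuousAt_rpow_const 0 (b - a) (Or.inr (sub_pos.2 hab).le)).tendsto.const_mul
      K).mono_left nhdsWithin_le_nhds
  rw [Real.zero_rpow (sub_pos.2 hab).ne', mul_zero] at hlim
  have hge : ∀ᶠ t : ℝ in nhdsWithin 0 (Set.Ioi 0), q ≤ K * t ^ (b - a) := by
    filter_upwards [Ioc_mem_nhdsGT (zero_lt_one' ℝ)] with t ht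
    rw [Real.rpow_sub ht.1, ← mul_div_assoc, le_div_iff₀ (Real.rpow_pos_of_pos ht.1 a)]
    exact h t ht.1 ht.2
  exact (ge_of_tendsto hlim hge).not_gt hq

theorem prod_dotProduct_mulVec_le_pow_mul_prod {d E : Type*} [Fintype d] [Fintype E]
    {M N : Matrix E E ℝ} (hM : M.PosSemidef) (hMN : (N - M).PosSemidef) {t : ℝ}
    (v : d → E → ℝ) (s : Finset d)
    (hs : ∀ k ∈ s, v k ⬝ᵥ M *ᵥ v k = t * (v k ⬝ᵥ N *ᵥ v k)) :
    ∏ k, v k ⬝ᵥ M *ᵥ v k ≤ t ^ s.card * ∏ k, v k ⬝ᵥ N *ᵥ v k := by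
  classical
  have hle (k : d) : v k ⬝ᵥ M *ᵥ v k ≤ v k ⬝ᵥ N *ᵥ v k := by
    simpa [sub_mulVec] using hMN.dotProduct_mulVec_nonneg (v k)
  calc ∏ k, v k ⬝ᵥ M *ᵥ v k ≤ ∏ k, (if k ∈ s then t else 1) * (v k ⬝ᵥ N *ᵥ v k) := by
        refine Finset.prod_le_prod (fun k _ => ?_) fun k _ => ?_
        · simpa only [star_trivial] using hM.dotProduct_mulVec_nonneg (v k)
        · split_ifs with hk
          · exact (hs k hk).le
          · simpa only [one_mul] using hle k
    _ = t ^ s.card * ∏ k, v k ⬝ᵥ N *ᵥ v k := by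
        rw [Finset.prod_mul_distrib, Finset.prod_ite_mem, Finset.univ_inter, Finset.prod_const]

variable {ι d : Type*} {κ : ι → Type*} [Fintype ι] [Fintype d] [∀ i, Fintype (κ i)]
  [DecidableEq d] [∀ i, DecidableEq (κ i)]
  {C : ∀ i, Matrix (κ i) d ℝ} {p : ι → ℝ} {Q : ∀ i, Matrix (κ i) (κ i) ℝ} {K : ℝ}

theorem exists_posDef_det_blMatrix_mul_le (hp : ∀ i, 0 ≤ p i) (hQ : ∀ i, (Q i).PosDef)
    (V : Submodule ℝ (d → ℝ)) {t : ℝ} (ht0 : 0 < t) (ht1 : t ≤ 1) {v : d → d → ℝ} {s : Finset d}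
    (hs : ∀ k ∈ s, v k ∈ V) :
    ∃ B : ∀ i, Matrix (κ i) (κ i) ℝ, (∀ i, (B i).PosDef ∧ (Q i - B i).PosSemidef) ∧
      (∀ i, (B i).det = (Q i).det * t ^ finrank ℝ (V.map (C i).mulVecLin)) ∧
      (blMatrix C p B).det * (of v).det ^ 2 ≤
        t ^ s.card * ∏ k, v k ⬝ᵥ blMatrix C p Q *ᵥ v k := by
  choose B hB hBQ hdet hBV using fun i =>
    exists_posDef_contraction (hQ i) (V.map (C i).mulVecLin) ht0 ht1
  have hpsd := posSemidef_blMatrix (C := C) hp fun i => (hB i).posSemidef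
  refine ⟨B, fun i => ⟨hB i, hBQ i⟩, hdet, ?_⟩
  refine (det_mul_det_sq_le_prod_dotProduct hpsd v).trans <|
    prod_dotProduct_mulVec_le_pow_mul_prod hpsd (posSemidef_blMatrix_sub_blMatrix hp hBQ) v s
      fun k hk => ?_
  rw [dotProduct_blMatrix_mulVec, dotProduct_blMatrix_mulVec, Finset.mul_sum]
  refine Finset.sum_congr rfl fun i _ => ?_
  have hscale : B i *ᵥ (C i *ᵥ v k) = t • Q i *ᵥ (C i *ᵥ v k) :=
    hBV i _ (Submodule.mem_map_of_mem (hs k hk))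
  rw [hscale, dotProduct_smul, smul_eq_mul, mul_left_comm]

theorem DetInequality.dimensionCondition (h : DetInequality C p Q K) (hK : 0 ≤ K)
    (hp : ∀ i, 0 ≤ p i) (hQ : ∀ i, (Q i).PosDef) : DimensionCondition C p := by
  intro V
  obtain ⟨b, s, hcard, hs⟩ := exists_basis_of_submodule (Pi.basisFun ℝ d) V
  have hb : (of b).det ≠ 0 :=
    ((isUnit_iff_isUnit_det _).1 (linearIndependent_rows_iff_isUnit.1 b.linearIndependent)).ne_zero
  have hq : 0 < (∏ i, (Q i).det ^ p i) * (of b).det ^ 2 :=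
    mul_pos (Finset.prod_pos fun i _ => Real.rpow_pos_of_pos (hQ i).det_pos _)
      (sq_pos_of_ne_zero hb)
  refine le_of_forall_rpow_le_mul_rpow (K := K * ∏ k, b k ⬝ᵥ blMatrix C p Q *ᵥ b k) hq
    fun t ht0 ht1 => ?_
  obtain ⟨B, hB, hdet, hle⟩ :=
    exists_posDef_det_blMatrix_mul_le (C := C) hp hQ V ht0 ht1 hs
  have hprod : ∏ i, (B i).det ^ p i = (∏ i, (Q i).det ^ p i) *
      t ^ ∑ i, p i * (finrank ℝ (V.map (C i).mulVecLin) : ℝ) := by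
    rw [Real.rpow_sum_of_pos ht0, ← Finset.prod_mul_distrib]
    refine Finset.prod_congr rfl fun i _ => ?_
    rw [hdet, Real.mul_rpow (hQ i).det_pos.le (by positivity), mul_comm (p i),
      Real.rpow_natCast_mul ht0.le]
  calc (∏ i, (Q i).det ^ p i) * (of b).det ^ 2 *
        t ^ ∑ i, p i * (finrank ℝ (V.map (C i).mulVecLin) : ℝ)
      = (∏ i, (B i).det ^ p i) * (of b).det ^ 2 := by rw [hprod]; ring
    _ ≤ K * (blMatrix C p B).det * (of b).det ^ 2 := by gcongr; exact h B hB
    _ ≤ K * (t ^ s.card * ∏ k, b k ⬝ᵥ blMatrix C p Q *ᵥ b k) := by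
        rw [mul_assoc]; gcongr
    _ = K * (∏ k, b k ⬝ᵥ blMatrix C p Q *ᵥ b k) * t ^ (finrank ℝ V : ℝ) := by
        rw [hcard, Real.rpow_natCast]; ring

end Necessity

section Sufficiency

variable {ι d : Type*} {κ : ι → Type*} [Fintype ι] [Fintype d] [∀ i, Fintype (κ i)]
  [∀ i, DecidableEq (κ i)] {C : ∀ i, Matrix (κ i) d ℝ} {p : ι → ℝ}
  {B : ∀ i, Matrix (κ i) (κ i) ℝ}

theorem DimensionCondition.exists_coversInitialSegments [LinearOrder d]
    (h : DimensionCondition C p) (hp : ∀ i, 0 ≤ p i) (hC : ∀ i, Function.Surjective (C i).mulVec)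
    {u : d → d → ℝ} (hu : LinearIndependent ℝ u) :
    ∃ f : ∀ i, κ i → d, CoversInitialSegments p f ∧
      ∀ i, (of fun l => C i *ᵥ u (f i l)).det ≠ 0 := by
  have hspan (i : ι) : Submodule.span ℝ (Set.range fun k => C i *ᵥ u k) = ⊤ := by
    have hrange : Set.range (fun k => C i *ᵥ u k) = (C i).mulVecLin '' Set.range u :=
      Set.range_comp (C i).mulVecLin u
    rw [hrange, ← Submodule.map_span,
      hu.span_eq_top_of_card_eq_finrank' (finrank_fintype_fun_eq_card ℝ).symm, Submodule.map_top]
    exact LinearMap.range_eq_top.2 (hC i)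
  choose f hind hcard using fun i =>
    exists_linearIndependent_comp_finrank_span_Iic_le (Pi.basisFun ℝ (κ i)) (hspan i)
  refine ⟨f, fun k => ?_, fun i => ?_⟩
  · have hfin : finrank ℝ (Submodule.span ℝ (u '' Set.Iic k)) = Finset.card {j | j ≤ k} := by
      have hIic : u '' Set.Iic k = Finset.image u {j | j ≤ k} := by
        simp [Set.Iic]
      rw [hIic, finrank_span_finset_eq_card, Finset.card_image_of_injective _ hu.injective]
      rw [← hIic]
      exact (hu.linearIndepOn _).id_image
    rw [← hfin]
    refine (h _).trans (Finset.sum_le_sum fun i _ => mul_le_mul_of_nonneg_left ?_ (hp i))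
    rw [Submodule.map_span, Set.image_image]
    exact_mod_cast hcard i k
  · exact ((isUnit_iff_isUnit_det _).1 (linearIndependent_rows_iff_isUnit.1 (hind i))).ne_zero

theorem DimensionCondition.exists_uniform_coversInitialSegments [LinearOrder d]
    (h : DimensionCondition C p) (hp : ∀ i, 0 ≤ p i) (hC : ∀ i, Function.Surjective (C i).mulVec)
    {S : Set (Matrix d d ℝ)} (hS : IsCompact S) (hunit : ∀ U ∈ S, IsUnit U) :
    ∃ δ : ℝ, 0 < δ ∧ ∀ U ∈ S, ∃ f : ∀ i, κ i → d, CoversInitialSegments p f ∧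
      ∀ i, δ ≤ (of fun l => C i *ᵥ U (f i l)).det ^ 2 := by
  refine hS.induction_on ⟨1, one_pos, by simp⟩ ?_ ?_ fun U₀ hU₀ => ?_
  · rintro s t hst ⟨δ, hδ, ht⟩
    exact ⟨δ, hδ, fun U hU => ht U (hst hU)⟩
  · rintro s t ⟨δ, hδ, hs⟩ ⟨ε, hε, ht⟩
    refine ⟨min δ ε, lt_min hδ hε, ?_⟩
    rintro U (hU | hU)
    · obtain ⟨f, hf, hdet⟩ := hs U hU
      exact ⟨f, hf, fun i => (min_le_left δ ε).trans (hdet i)⟩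
    · obtain ⟨f, hf, hdet⟩ := ht U hU
      exact ⟨f, hf, fun i => (min_le_right δ ε).trans (hdet i)⟩
  · obtain ⟨f, hf, hdet⟩ := h.exists_coversInitialSegments hp hC
      (linearIndependent_rows_iff_isUnit.2 (hunit U₀ hU₀))
    obtain ⟨δ, hδ, hδdet⟩ : ∃ δ : ℝ, 0 < δ ∧ ∀ i, δ < (of fun l => C i *ᵥ U₀ (f i l)).det ^ 2 :=
      ((Filter.eventually_all.2 fun i => Ioo_mem_nhdsGT (sq_pos_of_ne_zero (hdet i))).and
        self_mem_nhdsWithin).exists.imp fun δ hδ => ⟨hδ.2, fun i => (hδ.1 i).2⟩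
    refine ⟨{U | ∀ i, δ < (of fun l => C i *ᵥ U (f i l)).det ^ 2}, ?_, δ, hδ,
      fun U hU => ⟨f, hf, fun i => (hU i).le⟩⟩
    refine mem_nhdsWithin_of_mem_nhds (Filter.eventually_all.2 fun i => ?_)
    have hcont : Continuous fun U : Matrix d d ℝ => (of fun l => C i *ᵥ U (f i l)).det ^ 2 := by
      fun_prop
    exact hcont.continuousAt.eventually_const_lt (hδdet i)

theorem isCompact_orthogonalGroup (d : Type*) [Fintype d] [DecidableEq d] :
    IsCompact (orthogonalGroup d ℝ : Set (Matrix d d ℝ)) := by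
  have hclosed : IsClosed (orthogonalGroup d ℝ : Set (Matrix d d ℝ)) := isClosed_unitary
  have hbox : IsCompact (Set.univ.pi fun _ : d => Set.univ.pi fun _ : d => Set.Icc (-1 : ℝ) 1) :=
    isCompact_univ_pi fun _ => isCompact_univ_pi fun _ => isCompact_Icc
  exact hbox.of_isClosed_subset hclosed fun U hU i _ j _ =>
    abs_le.1 (entry_norm_bound_of_unitary hU i j)

theorem exists_orthogonal_dotProduct_mulVec_eq_eigenvalues {d : Type*} [Fintype d] [DecidableEq d]
    {M : Matrix d d ℝ} (hM : M.IsHermitian) (σ : Equiv.Perm d) :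
    ∃ U ∈ orthogonalGroup d ℝ, ∀ k, U k ⬝ᵥ M *ᵥ U k = hM.eigenvalues (σ k) := by
  let U : Matrix d d ℝ := hM.eigenvectorUnitary
  have hU : Uᵀ * U = 1 := Unitary.coe_star_mul_self hM.eigenvectorUnitary
  refine ⟨Uᵀ.submatrix σ id, (mem_orthogonalGroup_iff d ℝ).2 ?_, fun k => ?_⟩
  · have hsub : Uᵀ.submatrix σ id * (Uᵀ.submatrix σ id)ᵀ = (Uᵀ * U).submatrix σ σ := rfl
    rw [hsub, hU, submatrix_one_equiv]
  · rw [hM.eigenvalues_eq]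
    rfl

theorem eigenvalues_le_trace {d : Type*} [Fintype d] [DecidableEq d] {M : Matrix d d ℝ}
    (hM : M.PosSemidef) (k : d) : hM.1.eigenvalues k ≤ M.trace := by
  rw [hM.1.trace_eq_sum_eigenvalues]
  exact Finset.single_le_sum (fun j _ => hM.eigenvalues_nonneg j) (Finset.mem_univ k)

theorem det_mul_det_sq_le_prod_dotProduct_blMatrix (hp : ∀ i, 0 < p i)
    (hB : ∀ i, (B i).PosSemidef) (i : ι) (w : κ i → d → ℝ) :
    (B i).det * (of fun l => C i *ᵥ w l).det ^ 2 ≤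
      (p i)⁻¹ ^ Fintype.card (κ i) * ∏ l, w l ⬝ᵥ blMatrix C p B *ᵥ w l := by
  have hnonneg (j : ι) (y : κ j → ℝ) : 0 ≤ y ⬝ᵥ B j *ᵥ y := by
    simpa only [star_trivial] using (hB j).dotProduct_mulVec_nonneg y
  rw [← Finset.card_univ, ← Finset.prod_const, ← Finset.prod_mul_distrib]
  refine (det_mul_det_sq_le_prod_dotProduct (hB i) _).trans <|
    Finset.prod_le_prod (fun l _ => hnonneg i _) fun l _ => ?_
  rw [inv_mul_eq_div, le_div_iff₀' (hp i), dotProduct_blMatrix_mulVec]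
  exact Finset.single_le_sum
    (f := fun j => p j * ((C j *ᵥ w l) ⬝ᵥ B j *ᵥ (C j *ᵥ w l)))
    (fun j _ => mul_nonneg (hp j).le (hnonneg j _)) (Finset.mem_univ i)

theorem CoversInitialSegments.prod_det_rpow_le [LinearOrder d] {f : ∀ i, κ i → d}
    (hf : CoversInitialSegments p f) (hp : ∀ i, 0 < p i) (hB : ∀ i, (B i).PosSemidef)
    {u : d → d → ℝ} {δ : ℝ} (hδ : 0 < δ) (hfδ : ∀ i, δ ≤ (of fun l => C i *ᵥ u (f i l)).det ^ 2)
    (hmono : Monotone fun k => u k ⬝ᵥ blMatrix C p B *ᵥ u k)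
    (hpos : ∀ k, 0 < u k ⬝ᵥ blMatrix C p B *ᵥ u k) {T : ℝ} (hT : 0 < T)
    (huT : ∀ k, u k ⬝ᵥ blMatrix C p B *ᵥ u k ≤ T) :
    ∏ i, (B i).det ^ p i ≤ (∏ i, ((p i)⁻¹ ^ Fintype.card (κ i) / δ) ^ p i) *
      T ^ (∑ i, p i * Fintype.card (κ i) - Fintype.card d) *
        ∏ k, u k ⬝ᵥ blMatrix C p B *ᵥ u k := by
  set μ : d → ℝ := fun k => u k ⬝ᵥ blMatrix C p B *ᵥ u k
  have hc (i : ι) : 0 ≤ (p i)⁻¹ ^ Fintype.card (κ i) / δ :=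
    div_nonneg (pow_nonneg (inv_nonneg.2 (hp i).le) _) hδ.le
  have hdet (i : ι) : (B i).det ≤ (p i)⁻¹ ^ Fintype.card (κ i) / δ * ∏ l, μ (f i l) := by
    rw [div_mul_eq_mul_div, le_div_iff₀ hδ]
    exact (mul_le_mul_of_nonneg_left (hfδ i) (hB i).det_nonneg).trans
      (det_mul_det_sq_le_prod_dotProduct_blMatrix hp hB i fun l => u (f i l))
  calc ∏ i, (B i).det ^ p i
      ≤ ∏ i, ((p i)⁻¹ ^ Fintype.card (κ i) / δ * ∏ l, μ (f i l)) ^ p i :=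
        Finset.prod_le_prod (fun i _ => Real.rpow_nonneg (hB i).det_nonneg _) fun i _ =>
          Real.rpow_le_rpow (hB i).det_nonneg (hdet i) (hp i).le
    _ = (∏ i, ((p i)⁻¹ ^ Fintype.card (κ i) / δ) ^ p i) * ∏ i, (∏ l, μ (f i l)) ^ p i := by
        rw [← Finset.prod_mul_distrib]
        exact Finset.prod_congr rfl fun i _ =>
          Real.mul_rpow (hc i) (Finset.prod_nonneg fun l _ => (hpos _).le)
    _ ≤ _ := by
        rw [mul_assoc]
        exact mul_le_mul_of_nonneg_left (hf.prod_rpow_prod_comp_le hmono hpos hT huT)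
          (Finset.prod_nonneg fun i _ => Real.rpow_nonneg (hc i) _)

theorem DimensionCondition.exists_detInequality {n : ℕ} {C : ∀ i, Matrix (κ i) (Fin n) ℝ}
    (h : DimensionCondition C p) (hker : ∀ x, (∀ i, C i *ᵥ x = 0) → x = 0)
    (hC : ∀ i, Function.Surjective (C i).mulVec) (hp : ∀ i, 0 < p i)
    (Q : ∀ i, Matrix (κ i) (κ i) ℝ) : ∃ K, 0 ≤ K ∧ DetInequality C p Q K := by
  obtain ⟨δ, hδ, hsel⟩ := h.exists_uniform_coversInitialSegments (fun i => (hp i).le) hC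
    (isCompact_orthogonalGroup (Fin n)) fun U hU => Unitary.isUnit_coe (U := ⟨U, hU⟩)
  have hT : 0 < max (blMatrix C p Q).trace 1 := lt_max_of_lt_right one_pos
  refine ⟨(∏ i, ((p i)⁻¹ ^ Fintype.card (κ i) / δ) ^ p i) * max (blMatrix C p Q).trace 1 ^
    (∑ i, p i * Fintype.card (κ i) - Fintype.card (Fin n)), ?_, fun B hB => ?_⟩
  · refine mul_nonneg (Finset.prod_nonneg fun i _ => ?_) (Real.rpow_nonneg hT.le _)
    have := hp i
    positivity
  have hM := posDef_blMatrix hker hp fun i => (hB i).1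
  let σ := Tuple.sort hM.1.eigenvalues
  obtain ⟨U, hU, hUM⟩ := exists_orthogonal_dotProduct_mulVec_eq_eigenvalues hM.1 σ
  have hle (k : Fin n) : hM.1.eigenvalues (σ k) ≤ max (blMatrix C p Q).trace 1 :=
    ((eigenvalues_le_trace hM.posSemidef (σ k)).trans <|
      trace_blMatrix_le (fun i => (hp i).le) fun i => (hB i).2).trans (le_max_left _ _)
  have hdet : (blMatrix C p B).det = ∏ k, U k ⬝ᵥ blMatrix C p B *ᵥ U k := by
    simp only [hUM]
    rw [hM.1.det_eq_prod_eigenvalues, Equiv.prod_comp σ]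
    rfl
  obtain ⟨f, hf, hfδ⟩ := hsel U hU
  rw [hdet]
  refine hf.prod_det_rpow_le hp (fun i => (hB i).1.posSemidef) hδ hfδ ?_ ?_ hT ?_ <;>
    simp only [hUM]
  · exact Tuple.monotone_sort hM.1.eigenvalues
  · exact fun k => hM.eigenvalues_pos (σ k)
  · exact hle

end Sufficiency

/-- The regularized Brascamp–Lieb constant is finite iff the usual dimension
conditions hold on every subspace. -/
theorem BLconst_lt_top_iff
    {n m : ℕ} (hm : 1 ≤ m) {ni : Fin m → ℕ}
    (C : ∀ i, Matrix (Fin (ni i)) (Fin n) ℝ)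
    (hCsurj : ∀ i, Function.Surjective (C i).mulVec)
    (hker : ∀ x : Fin n → ℝ, (∀ i, (C i).mulVec x = 0) → x = 0)
    (p : Fin m → ℝ) (hp : ∀ i, 0 < p i)
    (Q : ∀ i, Matrix (Fin (ni i)) (Fin (ni i)) ℝ) (hQ : ∀ i, (Q i).PosDef) :
    BLconst C p Q < ⊤ ↔
      ∀ V : Submodule ℝ (Fin n → ℝ),
        (finrank ℝ V : ℝ) ≤ ∑ j, p j * (finrank ℝ (V.map (C j).mulVecLin) : ℝ) := by
  rw [BLconst_lt_top_iff_exists_detInequality hker hp Q]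
  constructor
  · rintro ⟨K, hK, h⟩
    exact h.dimensionCondition hK (fun i => (hp i).le) hQ
  · intro h
    exact DimensionCondition.exists_detInequality h hker hCsurj hp Q
end
end

section
/- Let (C,p,Q) be a Brascamp–Lieb datum and let V_c ⊆ ℝⁿ be a critical subspace, i.e. dim V_c = ∑_{j=1}^m p_j dim(C_j V_c). Then the following are equivalent: (i) dim V ≤ ∑_{j=1}^m p_j dim(C_j V) for every subspace V ⊆ ℝⁿ; (ii) dim V ≤ ∑_{j=1}^m p_j dim(C_j V) for every subspace V ⊆ V_c, and dim V − dim V_c ≤ ∑_{j=1}^m p_j (dim(C_j V) − dim(C_j V_c)) for every subspace V with V_c ⊆ V ⊆ ℝⁿ. -/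
open MeasureTheory Matrix Module
open scoped ENNReal

noncomputable section

/-! The excess `V ↦ ∑ⱼ pⱼ dim (Cⱼ V) - dim V` is submodular, because `dim (Cⱼ V)` is submodular and
`dim V` is modular. If it vanishes at `V_c`, then its value at `V` is at least the sum of its values
at `V ⊔ V_c` and `V ⊓ V_c`, so nonnegativity above and below `V_c` gives nonnegativity at `V`. -/

section Submodular

variable {α R : Type*} [Lattice α]

/-- Submodularity of a function on a lattice. Only `+` and `≤` on the codomain are assumed, so that
it applies both to `ℕ`-valued dimensions and to their weighted sums. -/
def IsSubmodular [Add R] [LE R] (g : α → R) : Prop :=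
  ∀ a b, g (a ⊔ b) + g (a ⊓ b) ≤ g a + g b

namespace IsSubmodular

theorem natCast [Semiring R] [PartialOrder R] [IsOrderedRing R] {g : α → ℕ} (hg : IsSubmodular g) :
    IsSubmodular fun a => (g a : R) :=
  fun a b => by simpa only [Nat.cast_add] using Nat.mono_cast (α := R) (hg a b)

theorem const_mul [Semiring R] [PartialOrder R] [IsOrderedRing R] {g : α → R}
    (hg : IsSubmodular g) {r : R} (hr : 0 ≤ r) : IsSubmodular fun a => r * g a :=
  fun a b => by simpa only [mul_add] using mul_le_mul_of_nonneg_left (hg a b) hr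

theorem sum [AddCommMonoid R] [PartialOrder R] [IsOrderedAddMonoid R] {ι : Type*} {s : Finset ι}
    {g : ι → α → R} (hg : ∀ i ∈ s, IsSubmodular (g i)) : IsSubmodular fun a => ∑ i ∈ s, g i a :=
  fun a b => by
    simpa only [Finset.sum_add_distrib] using Finset.sum_le_sum fun i hi => hg i hi a b

theorem sub_modular [AddCommGroup R] [PartialOrder R] [IsOrderedAddMonoid R] {g r : α → R}
    (hg : IsSubmodular g) (hr : ∀ a b, r (a ⊔ b) + r (a ⊓ b) = r a + r b) :
    IsSubmodular fun a => g a - r a :=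
  fun a b => by
    simpa only [sub_add_sub_comm, hr] using sub_le_sub_right (hg a b) (r a + r b)

theorem forall_nonneg_iff [AddCommMonoid R] [PartialOrder R] [IsOrderedAddMonoid R] {g : α → R}
    (hg : IsSubmodular g) {c : α} (hc : g c ≤ 0) :
    (∀ a, 0 ≤ g a) ↔ (∀ a ≤ c, 0 ≤ g a) ∧ ∀ a, c ≤ a → 0 ≤ g a := by
  refine ⟨fun h => ⟨fun a _ => h a, fun a _ => h a⟩, fun ⟨hbelow, habove⟩ a => ?_⟩
  calc
    0 ≤ g (a ⊔ c) + g (a ⊓ c) :=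
      add_nonneg (habove _ le_sup_right) (hbelow _ inf_le_right)
    _ ≤ g a + g c := hg a c
    _ ≤ g a := add_le_of_nonpos_right hc

end IsSubmodular

end Submodular

section Dimension

variable {K E : Type*} [DivisionRing K] [AddCommGroup E] [Module K E] [FiniteDimensional K E]

theorem isSubmodular_finrank_map {F : Type*} [AddCommGroup F] [Module K F] (f : E →ₗ[K] F) :
    IsSubmodular fun V : Submodule K E => finrank K (V.map f) := fun V W =>
  calc
    finrank K ((V ⊔ W).map f) + finrank K ((V ⊓ W).map f)
      ≤ finrank K ↥(V.map f ⊔ W.map f) + finrank K ↥(V.map f ⊓ W.map f) := by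
        rw [Submodule.map_sup]
        gcongr
        exact Submodule.finrank_mono (Submodule.map_inf_le f)
    _ = finrank K (V.map f) + finrank K (W.map f) :=
        Submodule.finrank_sup_add_finrank_inf_eq _ _

variable {ι R : Type*} [Fintype ι] {F : ι → Type*} [∀ j, AddCommGroup (F j)]
  [∀ j, Module K (F j)] [Ring R] [PartialOrder R] [IsOrderedRing R]

theorem isSubmodular_sum_mul_finrank_map_sub_finrank (f : ∀ j, E →ₗ[K] F j) {p : ι → R}
    (hp : ∀ j, 0 ≤ p j) :
    IsSubmodular fun V : Submodule K E =>
      ∑ j, p j * (finrank K (V.map (f j)) : R) - (finrank K V : R) := by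
  have himages : IsSubmodular fun V : Submodule K E => ∑ j, p j * (finrank K (V.map (f j)) : R) :=
    .sum fun j _ => (isSubmodular_finrank_map (f j)).natCast.const_mul (hp j)
  exact himages.sub_modular fun V W => by
    simp only [← Nat.cast_add, Submodule.finrank_sup_add_finrank_inf_eq]

theorem dimension_condition_split_along_critical_subspace_general
    (f : ∀ j, E →ₗ[K] F j) {p : ι → R} (hp : ∀ j, 0 ≤ p j) {Vc : Submodule K E}
    (hVc : (finrank K Vc : R) = ∑ j, p j * (finrank K (Vc.map (f j)) : R)) :
    (∀ V : Submodule K E, (finrank K V : R) ≤ ∑ j, p j * (finrank K (V.map (f j)) : R)) ↔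
      (∀ V ≤ Vc, (finrank K V : R) ≤ ∑ j, p j * (finrank K (V.map (f j)) : R)) ∧
        ∀ V, Vc ≤ V → (finrank K V : R) - (finrank K Vc : R) ≤
          ∑ j, p j * ((finrank K (V.map (f j)) : R) - (finrank K (Vc.map (f j)) : R)) := by
  simpa only [mul_sub, Finset.sum_sub_distrib, ← hVc, sub_le_sub_iff_right, sub_nonneg] using
    (isSubmodular_sum_mul_finrank_map_sub_finrank f hp).forall_nonneg_iff (sub_nonpos.2 hVc.ge)

end Dimension

/-- For a Brascamp–Lieb datum with a critical subspace `V_c`, the dimension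
condition holds globally iff it holds for the restricted and quotient data. -/
theorem dimension_condition_split_along_critical_subspace
    {n m : ℕ} (hm : 1 ≤ m) {ni : Fin m → ℕ}
    (C : ∀ i, Matrix (Fin (ni i)) (Fin n) ℝ)
    (hCsurj : ∀ i, Function.Surjective (C i).mulVec)
    (hker : ∀ x : Fin n → ℝ, (∀ i, (C i).mulVec x = 0) → x = 0)
    (p : Fin m → ℝ) (hp : ∀ i, 0 < p i)
    (Q : ∀ i, Matrix (Fin (ni i)) (Fin (ni i)) ℝ) (hQ : ∀ i, (Q i).PosDef)
    (Vc : Submodule ℝ (Fin n → ℝ))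
    (hVc : (finrank ℝ Vc : ℝ) = ∑ j, p j * (finrank ℝ (Vc.map (C j).mulVecLin) : ℝ)) :
    (∀ V : Submodule ℝ (Fin n → ℝ),
        (finrank ℝ V : ℝ) ≤ ∑ j, p j * (finrank ℝ (V.map (C j).mulVecLin) : ℝ)) ↔
      ((∀ V : Submodule ℝ (Fin n → ℝ), V ≤ Vc →
          (finrank ℝ V : ℝ) ≤ ∑ j, p j * (finrank ℝ (V.map (C j).mulVecLin) : ℝ)) ∧
        (∀ V : Submodule ℝ (Fin n → ℝ), Vc ≤ V →
          (finrank ℝ V : ℝ) - (finrank ℝ Vc : ℝ) ≤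
            ∑ j, p j * ((finrank ℝ (V.map (C j).mulVecLin) : ℝ) -
              (finrank ℝ (Vc.map (C j).mulVecLin) : ℝ)))) :=
  dimension_condition_split_along_critical_subspace_general (fun j => (C j).mulVecLin)
    (fun j => (hp j).le) hVc
end
end

section
/- Let (C,p,Q) be a Brascamp–Lieb datum such that dim V ≤ ∑_{j=1}^m p_j dim(C_j V) for every subspace V ⊆ ℝⁿ. Then BL(C,p,Q) < +∞. If moreover the datum is simple, i.e. no nonzero subspace V satisfies dim V = ∑ⱼ p_j dim(C_j V), then the datum is Gaussian-extremizable: there exist symmetric matrices B_j with 0 < B_j ≤ Q_j such that BL(C,p,Q)² = ∏_{j=1}^m det(B_j)^{p_j} / det(∑_{j=1}^m p_j C_jᵀ B_j C_j). -/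
open MeasureTheory Matrix Module
open scoped ENNReal

noncomputable section

/-!
The bound behind both assertions compares `∏ j, det (B j) ^ p j` with a power `det M ^ t`, where
`M = ∑ j, p j • (C j)ᵀ * B j * C j`. Let an orthogonal matrix `U` diagonalize `M`, with eigenvalues
in increasing order. In each `C j * U` greedily choose the columns that are not in the span of the
preceding ones: they form an invertible matrix, and if `t * dim V ≤ ∑ j, p j * dim (C j V)` for all
`V`, then every initial segment of columns contains many chosen ones. Hadamard's inequality bounds
`det (B j)` by the product of the eigenvalues at the chosen columns, up to the squared minor, and
summation by parts turns the counting condition into the bound by `det M ^ t`. Since the orthogonal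
group is compact, the minors may be taken bounded below uniformly in `U`.

The dimension condition is the case `t = 1`, which gives finiteness. Only finitely many dimensions
occur, so a simple datum admits some `t > 1`. The quotient is then at most a constant times
`det M ^ (t - 1)`, extends continuously by `0` to the compact set `0 ≤ B j ≤ Q j`, and attains a
positive maximum there, necessarily at a positive definite `B`.
-/

open scoped Finset

section Matrices

variable {ι κ : Type*}

theorem posSemidef_transpose_mul_mul_same_s7 [Finite ι] [Fintype κ] {B : Matrix κ κ ℝ}
    (hB : B.PosSemidef) (D : Matrix κ ι ℝ) : (Dᵀ * B * D).PosSemidef := by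
  simpa only [conjTranspose_eq_transpose_of_trivial] using hB.conjTranspose_mul_mul_same D

theorem sq_apply_le_of_posSemidef {G : Matrix ι ι ℝ} (hG : G.PosSemidef) (a b : ι) :
    G a b ^ 2 ≤ G a a * G b b := by
  have hminor : 0 ≤ (G.submatrix ![a, b] ![a, b]).det := (hG.submatrix ![a, b]).det_nonneg
  have hsymm : G b a = G a b := by simpa using hG.isHermitian.apply a b
  rw [det_fin_two] at hminor
  simp only [submatrix_apply, cons_val_zero, cons_val_one, hsymm] at hminor
  nlinarith

theorem isClosed_setOf_posSemidef [Finite ι] : IsClosed {B : Matrix ι ι ℝ | B.PosSemidef} := by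
  have := Fintype.ofFinite ι
  simp only [posSemidef_iff_dotProduct_mulVec, IsHermitian, Set.ofPred_and, Set.ofPred_forall]
  exact (isClosed_eq (by fun_prop) continuous_id).inter
    (isClosed_iInter fun x => isClosed_le continuous_const (by fun_prop))

theorem isCompact_setOf_posSemidef_and_sub_posSemidef [Finite ι] (Q : Matrix ι ι ℝ) :
    IsCompact {B : Matrix ι ι ℝ | B.PosSemidef ∧ (Q - B).PosSemidef} := by
  have hbox : IsCompact (Set.univ.pi fun a : ι => Set.univ.pi fun b : ι =>
      Set.Icc (-√(Q a a * Q b b)) (√(Q a a * Q b b))) :=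
    isCompact_univ_pi fun _ => isCompact_univ_pi fun _ => isCompact_Icc
  refine hbox.of_isClosed_subset (isClosed_setOf_posSemidef.inter
    (isClosed_setOf_posSemidef.preimage (continuous_const.sub continuous_id))) ?_
  rintro (B : Matrix ι ι ℝ) ⟨hB, hQB⟩ a - b -
  have hdiag (c : ι) : B c c ≤ Q c c := sub_nonneg.1 (hQB.diag_nonneg (i := c))
  exact abs_le.1 (Real.abs_le_sqrt ((sq_apply_le_of_posSemidef hB a b).trans
    (mul_le_mul (hdiag a) (hdiag b) hB.diag_nonneg (hB.diag_nonneg.trans (hdiag a)))))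

variable [Fintype ι] [DecidableEq ι]

theorem isCompact_orthogonalGroup_s7 : IsCompact (orthogonalGroup ι ℝ : Set (Matrix ι ι ℝ)) := by
  have hbox : IsCompact (Set.univ.pi fun _ : ι => Set.univ.pi fun _ : ι => Set.Icc (-1 : ℝ) 1) :=
    isCompact_univ_pi fun _ => isCompact_univ_pi fun _ => isCompact_Icc
  have hclosed : IsClosed (orthogonalGroup ι ℝ : Set (Matrix ι ι ℝ)) := by
    have : (orthogonalGroup ι ℝ : Set (Matrix ι ι ℝ)) = {U | Uᵀ * U = 1} :=
      Set.ext fun U => mem_orthogonalGroup_iff' ι ℝ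
    exact this ▸ isClosed_eq (by fun_prop) continuous_const
  exact hbox.of_isClosed_subset hclosed fun U hU i _ j _ =>
    abs_le.1 (entry_norm_bound_of_unitary hU i j)

theorem exists_orthogonal_conj_eq_diagonal_eigenvalues_comp {M : Matrix ι ι ℝ}
    (hM : M.IsHermitian) (σ : Equiv.Perm ι) :
    ∃ U ∈ orthogonalGroup ι ℝ, Uᵀ * M * U = diagonal (hM.eigenvalues ∘ σ) := by
  set W : Matrix ι ι ℝ := hM.eigenvectorUnitary.1
  have hW : Wᵀ * W = 1 := Unitary.coe_star_mul_self hM.eigenvectorUnitary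
  have hWM : Wᵀ * M * W = diagonal hM.eigenvalues := by
    have h := hM.conjStarAlgAut_star_eigenvectorUnitary
    rw [Unitary.conjStarAlgAut_apply, Unitary.coe_star, star_star] at h
    exact h
  refine ⟨W.submatrix id σ, (mem_orthogonalGroup_iff' ι ℝ).2 ?_, ?_⟩
  · calc (W.submatrix id σ)ᵀ * W.submatrix id σ = (Wᵀ * W).submatrix σ σ := rfl
      _ = 1 := by rw [hW, submatrix_one_equiv]
  · calc (W.submatrix id σ)ᵀ * M * W.submatrix id σ = (Wᵀ * M * W).submatrix σ σ := rfl
      _ = diagonal (hM.eigenvalues ∘ σ) := by rw [hWM, submatrix_diagonal_equiv]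

theorem eigenvalues_le_trace_of_posSemidef {M : Matrix ι ι ℝ} (hM : M.PosSemidef) (i : ι) :
    hM.isHermitian.eigenvalues i ≤ M.trace := by
  rw [hM.isHermitian.trace_eq_sum_eigenvalues]
  exact Finset.single_le_sum (f := hM.isHermitian.eigenvalues)
    (fun k _ => hM.eigenvalues_nonneg k) (Finset.mem_univ i)

theorem det_le_exp_trace_sub_card_of_posSemidef {G : Matrix ι ι ℝ} (hG : G.PosSemidef) :
    G.det ≤ Real.exp (G.trace - Fintype.card ι) := by
  calc G.det = ∏ i, hG.isHermitian.eigenvalues i := hG.isHermitian.det_eq_prod_eigenvalues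
    _ ≤ ∏ i, Real.exp (hG.isHermitian.eigenvalues i - 1) :=
      Finset.prod_le_prod (fun i _ => hG.eigenvalues_nonneg i) fun i _ => by
        simpa using Real.add_one_le_exp (hG.isHermitian.eigenvalues i - 1)
    _ = Real.exp (G.trace - Fintype.card ι) := by
      rw [← Real.exp_sum, hG.isHermitian.trace_eq_sum_eigenvalues]
      simp

/-- **Hadamard's inequality**. -/
theorem det_le_prod_diag_of_posSemidef {G : Matrix ι ι ℝ} (hG : G.PosSemidef) :
    G.det ≤ ∏ a, G a a := by
  by_cases hdet : G.det = 0
  · exact hdet.trans_le (Finset.prod_nonneg fun a _ => hG.diag_nonneg)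
  -- Rescaled to have unit diagonal, `G` has determinant at most `1` because its trace is its size.
  have hpos (a : ι) : 0 < G a a := (hG.posDef_iff_det_ne_zero.2 hdet).diag_pos
  set S : Matrix ι ι ℝ := diagonal fun a => (√(G a a))⁻¹
  have hS : (Sᵀ * G * S).PosSemidef := posSemidef_transpose_mul_mul_same_s7 hG S
  have htrace : (Sᵀ * G * S).trace = Fintype.card ι := by
    have hdiag (a : ι) : (√(G a a))⁻¹ * G a a * (√(G a a))⁻¹ = 1 := by
      have := (Real.sqrt_pos.2 (hpos a)).ne'
      field_simp
      exact (Real.sq_sqrt (hpos a).le).symm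
    simp [S, trace, hdiag]
  have hdetS : (Sᵀ * G * S).det = G.det / ∏ a, G a a := by
    have hsq : S.det * S.det = (∏ a, G a a)⁻¹ := by
      rw [det_diagonal, ← Finset.prod_mul_distrib, ← Finset.prod_inv_distrib]
      exact Finset.prod_congr rfl fun a _ => by rw [← mul_inv, Real.mul_self_sqrt (hpos a).le]
    rw [det_mul, det_mul, det_transpose, div_eq_mul_inv, ← hsq]
    ring
  have h := det_le_exp_trace_sub_card_of_posSemidef hS
  rwa [htrace, sub_self, Real.exp_zero, hdetS,
    div_le_one (Finset.prod_pos fun a _ => hpos a)] at h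

end Matrices

section PsdBox

variable {J : Type*} {κ : J → Type*}

/-- The families of positive semidefinite matrices bounded by `Q` in the Loewner order. It adds to
the inputs `0 < B j ≤ Q j` of the regularized Brascamp–Lieb constant the singular ones, and thus
becomes compact. -/
def psdBox (Q : ∀ j, Matrix (κ j) (κ j) ℝ) : Set (∀ j, Matrix (κ j) (κ j) ℝ) :=
  {B | ∀ j, (B j).PosSemidef ∧ (Q j - B j).PosSemidef}

theorem isCompact_psdBox [∀ j, Finite (κ j)] (Q : ∀ j, Matrix (κ j) (κ j) ℝ) :
    IsCompact (psdBox Q) := by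
  have hpi : psdBox Q = Set.univ.pi fun j => {B | B.PosSemidef ∧ (Q j - B).PosSemidef} := by
    ext B
    simp [psdBox]
  rw [hpi]
  exact isCompact_univ_pi fun j => isCompact_setOf_posSemidef_and_sub_posSemidef (Q j)

end PsdBox

section FiniteLinearOrder

variable {ι : Type*} [LinearOrder ι]

theorem exists_eq_sum_filter_le_of_antitoneOn (s : Finset ι) {f : ι → ℝ} (hf : AntitoneOn f s)
    (hf0 : ∀ k ∈ s, 0 ≤ f k) :
    ∃ c : ι → ℝ, (∀ k ∈ s, 0 ≤ c k) ∧ ∀ l ∈ s, f l = ∑ k ∈ s with l ≤ k, c k := by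
  induction s using Finset.induction_on_max generalizing f with
  | empty => exact ⟨0, by simp, by simp⟩
  | insert x s hx ih =>
    have hxs : x ∉ s := fun h => (hx x h).false
    have hfx : ∀ k ∈ s, f x ≤ f k := fun k hk =>
      hf (by simp [hk]) (by simp) (hx k hk).le
    obtain ⟨c, hc, hfc⟩ := ih (f := fun k => f k - f x)
      (fun k hk l hl hkl => sub_le_sub_right (hf (by simp_all) (by simp_all) hkl) _)
      fun k hk => sub_nonneg.2 (hfx k hk)
    have hupdate : ∀ l, ∑ k ∈ s with l ≤ k, Function.update c x (f x) k =
        ∑ k ∈ s with l ≤ k, c k := fun l => Finset.sum_congr rfl fun k hk =>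
      Function.update_of_ne (ne_of_mem_of_not_mem (Finset.mem_filter.1 hk).1 hxs) _ _
    refine ⟨Function.update c x (f x), fun k hk => ?_, fun l hl => ?_⟩
    · rcases Finset.mem_insert.1 hk with rfl | hk
      · simpa using hf0 k (by simp)
      · simpa [ne_of_mem_of_not_mem hk hxs] using hc k hk
    · rcases Finset.mem_insert.1 hl with rfl | hl
      · rw [Finset.filter_insert, if_pos le_rfl, Finset.filter_false_of_mem fun k hk =>
          (hx k hk).not_ge]
        simp
      · rw [Finset.filter_insert, if_pos (hx l hl).le, Finset.sum_insert (by simp [hxs]), hupdate,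
          ← hfc l hl]
        simp

variable {K E : Type*} [Field K] [AddCommGroup E] [Module K E]

/-- The pivots of a family of vectors indexed by a linear order: the indices of those vectors that
are not in the span of the preceding ones. -/
def pivotSet (K : Type*) {E : Type*} [Field K] [AddCommGroup E] [Module K E] (v : ι → E) : Set ι :=
  {k | v k ∉ Submodule.span K (v '' Set.Iio k)}

theorem linearIndepOn_pivotSet [Finite ι] (v : ι → E) : LinearIndepOn K v (pivotSet K v) := by
  suffices h : ∀ s : Finset ι, ↑s ⊆ pivotSet K v → LinearIndepOn K v (s : Set ι) by
    obtain ⟨s, hs⟩ := (pivotSet K v).toFinite.exists_finset_coe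
    exact hs ▸ h s hs.le
  intro s hs
  induction s using Finset.induction_on_max with
  | empty => simp
  | insert x s hx ih =>
    rw [Finset.coe_insert, Set.insert_subset_iff] at hs
    rw [Finset.coe_insert]
    exact (ih hs.2).insert fun hmem => hs.1 (Submodule.span_mono (Set.image_mono hx) hmem)

theorem mem_span_image_pivotSet_inter_Iic [WellFoundedLT ι] (v : ι → E) (k : ι) :
    v k ∈ Submodule.span K (v '' (pivotSet K v ∩ Set.Iic k)) := by
  induction k using WellFoundedLT.induction with
  | ind k ih =>
    by_cases hk : v k ∈ Submodule.span K (v '' Set.Iio k)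
    · refine Submodule.span_le.2 ?_ hk
      rintro _ ⟨l, hl, rfl⟩
      exact Submodule.span_mono (Set.image_mono
        (Set.inter_subset_inter_right _ (Set.Iic_subset_Iic.2 (le_of_lt hl)))) (ih l hl)
    · exact Submodule.subset_span ⟨k, ⟨hk, le_rfl⟩, rfl⟩

theorem exists_linearIndependent_comp_of_span_range_eq_top [Finite ι] {κ : Type*} [Fintype κ]
    {v : ι → E} (hv : Submodule.span K (Set.range v) = ⊤) (hκ : Fintype.card κ = finrank K E) :
    ∃ e : κ → ι, LinearIndependent K (v ∘ e) ∧
      ∀ k, finrank K (Submodule.span K (v '' Set.Iic k)) ≤ #{a | e a ≤ k} := by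
  have := Fintype.ofFinite (pivotSet K v)
  have hspan : ⊤ ≤ Submodule.span K (Set.range fun k : pivotSet K v => v k) := by
    rw [← hv, Submodule.span_le, ← Set.image_eq_range]
    rintro _ ⟨k, rfl⟩
    exact Submodule.span_mono (Set.image_mono Set.inter_subset_left)
      (mem_span_image_pivotSet_inter_Iic v k)
  have hcard : Fintype.card κ = Fintype.card (pivotSet K v) :=
    hκ.trans (finrank_eq_card_basis (Basis.mk (linearIndepOn_pivotSet v) hspan))
  obtain ⟨e⟩ : Nonempty (κ ≃ pivotSet K v) := Fintype.card_eq.1 hcard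
  refine ⟨fun a => e a, (linearIndepOn_pivotSet v).comp e e.injective, fun k => ?_⟩
  set w : {a // (e a : ι) ≤ k} → E := fun a => v (e a)
  have := FiniteDimensional.span_of_finite K (Set.finite_range w)
  have hle : Submodule.span K (v '' Set.Iic k) ≤ Submodule.span K (Set.range w) := by
    rw [Submodule.span_le]
    rintro _ ⟨l, hl, rfl⟩
    refine Submodule.span_mono ?_ (mem_span_image_pivotSet_inter_Iic v l)
    rintro _ ⟨i, ⟨hi, hil⟩, rfl⟩
    exact ⟨⟨e.symm ⟨i, hi⟩, by simpa using le_trans hil hl⟩, by simp [w]⟩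
  rw [← Fintype.card_subtype]
  exact (Submodule.finrank_mono hle).trans (finrank_range_le_card w)

end FiniteLinearOrder

theorem prod_rpow_eq_exp_mul_sum_log {α : Type*} [Fintype α] {x : α → ℝ} (hx : ∀ a, 0 < x a)
    (s : ℝ) : (∏ a, x a) ^ s = Real.exp (s * ∑ a, Real.log (x a)) := by
  rw [Real.rpow_def_of_pos (Finset.prod_pos fun a _ => hx a), Real.log_prod fun a _ => (hx a).ne',
    mul_comm]

section BalancedSelections

variable {ι J : Type*} [LinearOrder ι] [Fintype ι] [Fintype J] {κ : J → Type*}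
  [∀ j, Fintype (κ j)] {p : J → ℝ} {t : ℝ} {e : ∀ j, κ j → ι}

/-- A family of selections `e j` of elements of a finite linear order is balanced, for the weights
`p` and the exponent `t`, when every initial segment contains, counted with the weights `p j`, at
least `t` times as many selected elements as it has elements. -/
def IsBLBalanced (p : J → ℝ) (t : ℝ) (e : ∀ j, κ j → ι) : Prop :=
  ∀ k, t * #{l | l ≤ k} ≤ ∑ j, p j * #{a | e j a ≤ k}

theorem sum_comp_eq_sum_mul_card {α : Type*} [Fintype α] {f c : ι → ℝ}
    (hf : ∀ l, f l = ∑ k with l ≤ k, c k) (g : α → ι) :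
    ∑ a, f (g a) = ∑ k, c k * #{a | g a ≤ k} := by
  simp only [hf, Finset.sum_filter]
  rw [Finset.sum_comm]
  simp [← Finset.sum_filter, mul_comm]

theorem IsBLBalanced.mul_sum_le (he : IsBLBalanced p t e) {f : ι → ℝ} (hf : Antitone f)
    (hf0 : ∀ k, 0 ≤ f k) : t * ∑ k, f k ≤ ∑ j, p j * ∑ a, f (e j a) := by
  obtain ⟨c, hc, hfc⟩ :=
    exists_eq_sum_filter_le_of_antitoneOn Finset.univ (hf.antitoneOn _) fun k _ => hf0 k
  replace hfc : ∀ l, f l = ∑ k with l ≤ k, c k := fun l => hfc l (Finset.mem_univ l)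
  calc t * ∑ k, f k = ∑ k, c k * (t * #{l | l ≤ k}) := by
        rw [sum_comp_eq_sum_mul_card hfc fun k => k, Finset.mul_sum]
        exact Finset.sum_congr rfl fun k _ => by ring
    _ ≤ ∑ k, c k * ∑ j, p j * #{a | e j a ≤ k} :=
        Finset.sum_le_sum fun k hk => mul_le_mul_of_nonneg_left (he k) (hc k hk)
    _ = ∑ j, p j * ∑ a, f (e j a) := by
        simp only [sum_comp_eq_sum_mul_card hfc, Finset.mul_sum]
        rw [Finset.sum_comm]
        simp only [mul_left_comm]

theorem IsBLBalanced.prod_rpow_le (he : IsBLBalanced p t e) {μ : ι → ℝ} {R : ℝ} (hμ : Monotone μ)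
    (hμ0 : ∀ k, 0 < μ k) (hR : 0 < R) (hμR : ∀ k, μ k ≤ R) :
    ∏ j, (∏ a, μ (e j a)) ^ p j ≤
      R ^ (∑ j, p j * Fintype.card (κ j) - t * Fintype.card ι) * (∏ k, μ k) ^ t := by
  have hlog : t * ∑ k, (Real.log R - Real.log (μ k)) ≤
      ∑ j, p j * ∑ a, (Real.log R - Real.log (μ (e j a))) :=
    he.mul_sum_le (fun k l hkl => sub_le_sub_left (Real.log_le_log (hμ0 k) (hμ hkl)) _)
      fun k => sub_nonneg.2 (Real.log_le_log (hμ0 k) (hμR k))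
  simp only [prod_rpow_eq_exp_mul_sum_log hμ0, prod_rpow_eq_exp_mul_sum_log fun a => hμ0 (e _ a),
    Real.rpow_def_of_pos hR, ← Real.exp_add, ← Real.exp_sum, Real.exp_le_exp]
  simp only [Finset.sum_sub_distrib, Finset.sum_const, Finset.card_univ, nsmul_eq_mul, mul_sub,
    ← mul_assoc, ← Finset.sum_mul] at hlog
  linarith

end BalancedSelections

section WeightedRank

variable {ι J : Type*} [Fintype ι] [Fintype J] {κ : J → Type*}

/-- The weighted total dimension `∑ j, p j * dim (C j V)` of the images of a subspace, which the
dimension condition of Brascamp–Lieb theory compares with `dim V`. -/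
def blRank (C : ∀ j, Matrix (κ j) ι ℝ) (p : J → ℝ) (V : Submodule ℝ (ι → ℝ)) : ℝ :=
  ∑ j, p j * (finrank ℝ (V.map (C j).mulVecLin) : ℝ)

theorem mul_finrank_le_blRank_mul [DecidableEq ι] {C : ∀ j, Matrix (κ j) ι ℝ} {p : J → ℝ} {t : ℝ}
    (hdim : ∀ V : Submodule ℝ (ι → ℝ), t * finrank ℝ V ≤ blRank C p V) {U : Matrix ι ι ℝ}
    (hU : IsUnit U) (V : Submodule ℝ (ι → ℝ)) :
    t * finrank ℝ V ≤ blRank (fun j => C j * U) p V := by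
  have hinj : Function.Injective U.mulVecLin := mulVec_injective_of_isUnit hU
  calc t * finrank ℝ V = t * finrank ℝ (V.map U.mulVecLin) := by
        rw [← (Submodule.equivMapOfInjective U.mulVecLin hinj V).finrank_eq]
    _ ≤ blRank C p (V.map U.mulVecLin) := hdim _
    _ = blRank (fun j => C j * U) p V :=
        Finset.sum_congr rfl fun j _ => by rw [mulVecLin_mul, Submodule.map_comp]

theorem exists_one_lt_mul_finrank_le_blRank [∀ j, Finite (κ j)] {C : ∀ j, Matrix (κ j) ι ℝ}
    {p : J → ℝ} (hdim : ∀ V : Submodule ℝ (ι → ℝ), V ≠ ⊥ → finrank ℝ V < blRank C p V) :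
    ∃ t > 1, ∀ V : Submodule ℝ (ι → ℝ), t * finrank ℝ V ≤ blRank C p V := by
  classical
  have := fun j => Fintype.ofFinite (κ j)
  set dims : Submodule ℝ (ι → ℝ) → ℕ × (J → ℕ) := fun V =>
    (finrank ℝ V, fun j => finrank ℝ (V.map (C j).mulVecLin))
  have hfinite : (Set.range dims).Finite := by
    refine (Set.finite_Icc 0 (Fintype.card ι, fun j => Fintype.card (κ j))).subset ?_
    rintro _ ⟨V, rfl⟩
    exact ⟨zero_le, by simpa using V.finrank_le,
      fun j => by simpa using (V.map (C j).mulVecLin).finrank_le⟩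
  have hevent : ∀ᶠ t : ℝ in nhdsWithin 1 (Set.Ioi 1), ∀ d ∈ Set.range dims,
      t * d.1 ≤ ∑ j, p j * (d.2 j : ℝ) := by
    rw [Filter.eventually_all_finite hfinite]
    rintro _ ⟨V, rfl⟩
    rcases eq_or_ne V ⊥ with rfl | hV
    · have hbot (j : J) : finrank ℝ ((⊥ : Submodule ℝ (ι → ℝ)).map (C j).mulVecLin) = 0 := by
        rw [Submodule.map_bot, finrank_bot]
      simp [dims, hbot]
    have hcont : ContinuousAt (fun t : ℝ => t * finrank ℝ V) 1 := by fun_prop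
    have hlt := hcont.eventually_lt_const (u := blRank C p V) (by simpa using hdim V hV)
    exact nhdsWithin_le_nhds (hlt.mono fun t ht => ht.le)
  obtain ⟨t, ht, ht1⟩ := (hevent.and self_mem_nhdsWithin).exists
  exact ⟨t, ht1, fun V => ht _ ⟨V, rfl⟩⟩

end WeightedRank

section BrascampLiebForm

variable {ι J : Type*} [Fintype J] {κ : J → Type*} [∀ j, Fintype (κ j)]
  {C : ∀ j, Matrix (κ j) ι ℝ} {p : J → ℝ} {B Q : ∀ j, Matrix (κ j) (κ j) ℝ}

/-- The quadratic form `∑ j, p j • (C j)ᵀ * B j * C j` in the denominator of the Brascamp–Lieb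
quotient. -/
def blForm (C : ∀ j, Matrix (κ j) ι ℝ) (p : J → ℝ) (B : ∀ j, Matrix (κ j) (κ j) ℝ) :
    Matrix ι ι ℝ :=
  ∑ j, p j • ((C j)ᵀ * B j * C j)

theorem transpose_mul_blForm_mul [Fintype ι] (U : Matrix ι ι ℝ) :
    Uᵀ * blForm C p B * U = blForm (fun j => C j * U) p B := by
  simp only [blForm, Matrix.mul_sum, Matrix.sum_mul, Matrix.mul_smul, Matrix.smul_mul,
    transpose_mul, Matrix.mul_assoc]

theorem posSemidef_blForm [Finite ι] (hp : ∀ j, 0 ≤ p j) (hB : ∀ j, (B j).PosSemidef) :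
    (blForm C p B).PosSemidef :=
  posSemidef_sum _ fun j _ => (posSemidef_transpose_mul_mul_same_s7 (hB j) (C j)).smul (hp j)

theorem posDef_blForm [Fintype ι] (hker : ∀ x : ι → ℝ, (∀ j, (C j).mulVec x = 0) → x = 0)
    (hp : ∀ j, 0 < p j) (hB : ∀ j, (B j).PosDef) : (blForm C p B).PosDef := by
  refine PosDef.of_dotProduct_mulVec_pos
    (posSemidef_blForm (fun j => (hp j).le) fun j => (hB j).posSemidef).isHermitian fun x hx => ?_
  have hform : star x ⬝ᵥ (blForm C p B *ᵥ x) =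
      ∑ j, p j * (star (C j *ᵥ x) ⬝ᵥ (B j *ᵥ (C j *ᵥ x))) := by
    simp only [blForm, sum_mulVec, dotProduct_sum, smul_mulVec, dotProduct_smul, smul_eq_mul,
      star_trivial]
    refine Finset.sum_congr rfl fun j _ => ?_
    rw [← mulVec_mulVec, ← mulVec_mulVec, dotProduct_mulVec, vecMul_transpose]
  obtain ⟨j, hj⟩ : ∃ j, C j *ᵥ x ≠ 0 := by
    by_contra! h
    exact hx (hker x h)
  rw [hform]
  exact Finset.sum_pos'
    (fun i _ => mul_nonneg (hp i).le ((hB i).posSemidef.dotProduct_mulVec_nonneg _))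
    ⟨j, Finset.mem_univ j, mul_pos (hp j) ((hB j).dotProduct_mulVec_pos hj)⟩

theorem trace_blForm_le [Fintype ι] (hp : ∀ j, 0 ≤ p j) (hBQ : ∀ j, (Q j - B j).PosSemidef) :
    (blForm C p B).trace ≤ (blForm C p Q).trace := by
  have hsub : blForm C p (fun j => Q j - B j) = blForm C p Q - blForm C p B := by
    simp only [blForm, ← Finset.sum_sub_distrib, Matrix.mul_sub, Matrix.sub_mul, smul_sub]
  have htrace := (posSemidef_blForm (C := C) hp hBQ).trace_nonneg
  rwa [hsub, trace_sub, sub_nonneg] at htrace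

theorem mul_transpose_mul_mul_diag_le_blForm_diag [Finite ι] (hp : ∀ j, 0 ≤ p j)
    (hB : ∀ j, (B j).PosSemidef) (j : J) (k : ι) :
    p j * ((C j)ᵀ * B j * C j) k k ≤ blForm C p B k k := by
  have happly : blForm C p B k k = ∑ i, p i * ((C i)ᵀ * B i * C i) k k := by
    simp [blForm, Matrix.sum_apply]
  rw [happly]
  exact Finset.single_le_sum (f := fun i => p i * ((C i)ᵀ * B i * C i) k k)
    (fun i _ => mul_nonneg (hp i) (posSemidef_transpose_mul_mul_same_s7 (hB i) (C i)).diag_nonneg)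
    (Finset.mem_univ j)

variable [∀ j, DecidableEq (κ j)]

/-- The weighted product `∏ j, |det E j| ^ (2 * p j)`, where `E j` is the square matrix formed by
the columns of `C j` selected by `e j`. -/
def blMinor (C : ∀ j, Matrix (κ j) ι ℝ) (p : J → ℝ) (e : ∀ j, κ j → ι) : ℝ :=
  ∏ j, (((C j).submatrix id (e j)).det ^ 2) ^ p j

theorem det_mul_det_submatrix_sq_le [Finite ι] (hp : ∀ j, 0 < p j) (hB : ∀ j, (B j).PosSemidef)
    (j : J) (e : κ j → ι) :
    (B j).det * ((C j).submatrix id e).det ^ 2 ≤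
      (p j)⁻¹ ^ Fintype.card (κ j) * ∏ a, blForm C p B (e a) (e a) := by
  set E := (C j).submatrix id e
  have hE : (Eᵀ * B j * E).PosSemidef := posSemidef_transpose_mul_mul_same_s7 (hB j) E
  have hdiag (a : κ j) : (Eᵀ * B j * E) a a ≤ (p j)⁻¹ * blForm C p B (e a) (e a) := by
    rw [le_inv_mul_iff₀ (hp j)]
    exact mul_transpose_mul_mul_diag_le_blForm_diag (fun i => (hp i).le) hB j (e a)
  calc (B j).det * E.det ^ 2 = (Eᵀ * B j * E).det := by
        rw [det_mul, det_mul, det_transpose]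
        ring
    _ ≤ ∏ a, (Eᵀ * B j * E) a a := det_le_prod_diag_of_posSemidef hE
    _ ≤ ∏ a, (p j)⁻¹ * blForm C p B (e a) (e a) :=
        Finset.prod_le_prod (fun a _ => hE.diag_nonneg) fun a _ => hdiag a
    _ = (p j)⁻¹ ^ Fintype.card (κ j) * ∏ a, blForm C p B (e a) (e a) := by
        rw [Finset.prod_mul_distrib, Finset.prod_const, Finset.card_univ]

theorem prod_det_rpow_mul_blMinor_le [Finite ι] (hp : ∀ j, 0 < p j) (hB : ∀ j, (B j).PosSemidef)
    (e : ∀ j, κ j → ι) :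
    (∏ j, (B j).det ^ p j) * blMinor C p e ≤
      (∏ j, ((p j)⁻¹ ^ Fintype.card (κ j)) ^ p j) *
        ∏ j, (∏ a, blForm C p B (e j a) (e j a)) ^ p j := by
  have hdet (j : J) : 0 ≤ (B j).det := (hB j).det_nonneg
  have hdiag (k : ι) : 0 ≤ blForm C p B k k :=
    (posSemidef_blForm (fun j => (hp j).le) hB).diag_nonneg
  rw [blMinor, ← Finset.prod_mul_distrib, ← Finset.prod_mul_distrib]
  refine Finset.prod_le_prod (fun j _ => by have := hdet j; positivity) fun j _ => ?_
  have hpj := hp j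
  rw [← Real.mul_rpow (hdet j) (sq_nonneg _),
    ← Real.mul_rpow (by positivity) (Finset.prod_nonneg fun a _ => hdiag _)]
  exact Real.rpow_le_rpow (mul_nonneg (hdet j) (sq_nonneg _))
    (det_mul_det_submatrix_sq_le hp hB j (e j)) hpj.le

end BrascampLiebForm

section UniformSelections

theorem exists_pos_forall_exists_le_of_isCompact {X α : Type*} [TopologicalSpace X] [Finite α]
    {K : Set X} (hK : IsCompact K) {f : α → X → ℝ} (hf : ∀ i, ContinuousOn (f i) K)
    (hpos : ∀ x ∈ K, ∃ i, 0 < f i x) : ∃ c > 0, ∀ x ∈ K, ∃ i, c ≤ f i x := by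
  have := Fintype.ofFinite α
  rcases K.eq_empty_or_nonempty with rfl | hne
  · exact ⟨1, one_pos, by simp⟩
  have : Nonempty α := hne.elim fun x hx => (hpos x hx).nonempty
  obtain ⟨x₀, hx₀, hmin⟩ := hK.exists_isMinOn hne
    (ContinuousOn.finset_sup'_apply Finset.univ_nonempty fun i _ => hf i)
  obtain ⟨i, hi⟩ := hpos x₀ hx₀
  refine ⟨_, hi, fun x hx => ?_⟩
  obtain ⟨l, -, hl⟩ := Finset.exists_mem_eq_sup' (s := Finset.univ) Finset.univ_nonempty (f · x)
  refine ⟨l, ?_⟩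
  calc f i x₀ ≤ Finset.univ.sup' Finset.univ_nonempty (f · x₀) :=
        Finset.le_sup' (f · x₀) (Finset.mem_univ i)
    _ ≤ Finset.univ.sup' Finset.univ_nonempty (f · x) := hmin hx
    _ = f l x := hl

variable {ι J : Type*} [LinearOrder ι] [Fintype ι] [Fintype J] {κ : J → Type*}
  [∀ j, Fintype (κ j)] [∀ j, DecidableEq (κ j)] {C : ∀ j, Matrix (κ j) ι ℝ} {p : J → ℝ} {t : ℝ}

theorem exists_isBLBalanced_blMinor_pos (hC : ∀ j, Function.Surjective (C j).mulVec)
    (hp : ∀ j, 0 ≤ p j) (hdim : ∀ V : Submodule ℝ (ι → ℝ), t * finrank ℝ V ≤ blRank C p V) :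
    ∃ e : ∀ j, κ j → ι, IsBLBalanced p t e ∧ 0 < blMinor C p e := by
  have hspan (j : J) : Submodule.span ℝ (Set.range (C j).col) = ⊤ := by
    rw [← range_mulVecLin]
    exact LinearMap.range_eq_top.2 (hC j)
  choose e hli hrank using fun j =>
    exists_linearIndependent_comp_of_span_range_eq_top (κ := κ j) (hspan j) (by simp)
  refine ⟨e, fun k => ?_, Finset.prod_pos fun j _ => Real.rpow_pos_of_pos (sq_pos_of_ne_zero ?_) _⟩
  · set V := Pi.spanSubset ℝ (Set.Iic k)
    have hV : finrank ℝ V = #{l | l ≤ k} := by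
      rw [Pi.dim_spanSubset, ← Set.ncard_coe_finset]
      simp [Set.Iic]
    have hmap (j : J) : V.map (C j).mulVecLin = Submodule.span ℝ ((C j).col '' Set.Iic k) := by
      change (Submodule.span ℝ (Pi.basisFun ℝ ι '' Set.Iic k)).map (C j).mulVecLin = _
      rw [Submodule.map_span, Set.image_image]
      simp
    calc t * #{l | l ≤ k} = t * finrank ℝ V := by rw [hV]
      _ ≤ blRank C p V := hdim V
      _ ≤ ∑ j, p j * #{a | e j a ≤ k} := Finset.sum_le_sum fun j _ =>
          mul_le_mul_of_nonneg_left (by rw [hmap]; exact_mod_cast hrank j k) (hp j)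
  · have hunit : IsUnit ((C j).submatrix id (e j)) := linearIndependent_cols_iff_isUnit.1 (hli j)
    exact ((isUnit_iff_isUnit_det _).1 hunit).ne_zero

theorem exists_pos_forall_orthogonal_exists_isBLBalanced
    (hC : ∀ j, Function.Surjective (C j).mulVec) (hp : ∀ j, 0 ≤ p j)
    (hdim : ∀ V : Submodule ℝ (ι → ℝ), t * finrank ℝ V ≤ blRank C p V) :
    ∃ c > 0, ∀ U ∈ orthogonalGroup ι ℝ, ∃ e : ∀ j, κ j → ι,
      IsBLBalanced p t e ∧ c ≤ blMinor (fun j => C j * U) p e := by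
  have hcont (e : ∀ j, κ j → ι) :
      Continuous fun U : Matrix ι ι ℝ => blMinor (fun j => C j * U) p e :=
    continuous_finsetProd _ fun j _ => Continuous.rpow_const (by fun_prop) fun _ => Or.inr (hp j)
  obtain ⟨c, hc, hcU⟩ := exists_pos_forall_exists_le_of_isCompact
    (α := {e : ∀ j, κ j → ι // IsBLBalanced p t e}) isCompact_orthogonalGroup_s7
    (fun e => (hcont e).continuousOn) fun U hU => by
      have hunit : IsUnit U := IsUnit.of_mul_eq_one_right _ ((mem_orthogonalGroup_iff' ι ℝ).1 hU)
      have hsurj (j : J) : Function.Surjective (C j * U).mulVec := by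
        rw [← coe_mulVecLin, mulVecLin_mul]
        exact (hC j).comp (mulVec_surjective_iff_isUnit.2 hunit)
      obtain ⟨e, he, hpos⟩ :=
        exists_isBLBalanced_blMinor_pos hsurj hp (mul_finrank_le_blRank_mul hdim hunit)
      exact ⟨⟨e, he⟩, hpos⟩
  refine ⟨c, hc, fun U hU => ?_⟩
  obtain ⟨⟨e, he⟩, hce⟩ := hcU U hU
  exact ⟨e, he, hce⟩

end UniformSelections

section QuotientBound

variable {J : Type*} [Fintype J] {κ : J → Type*} [∀ j, Fintype (κ j)] [∀ j, DecidableEq (κ j)]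
  {p : J → ℝ} {t : ℝ} {B : ∀ j, Matrix (κ j) (κ j) ℝ}

theorem exists_orthogonal_forall_isBLBalanced_prod_det_rpow_mul_blMinor_le {n : ℕ}
    {C : ∀ j, Matrix (κ j) (Fin n) ℝ} (hp : ∀ j, 0 < p j) (hB : ∀ j, (B j).PosSemidef)
    (hM : (blForm C p B).PosDef) {R : ℝ} (hR : 0 < R) (htrace : (blForm C p B).trace ≤ R) :
    ∃ U ∈ orthogonalGroup (Fin n) ℝ, ∀ (t : ℝ) (e : ∀ j, κ j → Fin n), IsBLBalanced p t e →
      (∏ j, (B j).det ^ p j) * blMinor (fun j => C j * U) p e ≤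
        (∏ j, ((p j)⁻¹ ^ Fintype.card (κ j)) ^ p j) *
          (R ^ (∑ j, p j * Fintype.card (κ j) - t * n) * (blForm C p B).det ^ t) := by
  set σ := Tuple.sort hM.isHermitian.eigenvalues
  set μ := hM.isHermitian.eigenvalues ∘ σ
  obtain ⟨U, hU, hUM⟩ := exists_orthogonal_conj_eq_diagonal_eigenvalues_comp hM.isHermitian σ
  rw [transpose_mul_blForm_mul] at hUM
  refine ⟨U, hU, fun t e he => ?_⟩
  have hdet : (blForm C p B).det = ∏ k, μ k := by
    rw [hM.isHermitian.det_eq_prod_eigenvalues]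
    exact (Equiv.prod_comp σ hM.isHermitian.eigenvalues).symm
  calc (∏ j, (B j).det ^ p j) * blMinor (fun j => C j * U) p e
      ≤ (∏ j, ((p j)⁻¹ ^ Fintype.card (κ j)) ^ p j) * ∏ j, (∏ a, μ (e j a)) ^ p j := by
        simpa only [hUM, diagonal_apply_eq] using
          prod_det_rpow_mul_blMinor_le (C := fun j => C j * U) hp hB e
    _ ≤ (∏ j, ((p j)⁻¹ ^ Fintype.card (κ j)) ^ p j) *
          (R ^ (∑ j, p j * Fintype.card (κ j) - t * n) * (blForm C p B).det ^ t) := by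
        refine mul_le_mul_of_nonneg_left ?_ (Finset.prod_nonneg fun j _ => ?_)
        · have := he.prod_rpow_le (μ := μ) (Tuple.monotone_sort _)
            (fun k => hM.eigenvalues_pos (σ k)) hR
            fun k => (eigenvalues_le_trace_of_posSemidef hM.posSemidef (σ k)).trans htrace
          rwa [Fintype.card_fin, ← hdet] at this
        · have := hp j
          positivity

theorem exists_forall_prod_det_rpow_le {n : ℕ} {C : ∀ j, Matrix (κ j) (Fin n) ℝ}
    (hC : ∀ j, Function.Surjective (C j).mulVec)
    (hker : ∀ x : Fin n → ℝ, (∀ j, (C j).mulVec x = 0) → x = 0) (hp : ∀ j, 0 < p j)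
    (hdim : ∀ V : Submodule ℝ (Fin n → ℝ), t * finrank ℝ V ≤ blRank C p V)
    (Q : ∀ j, Matrix (κ j) (κ j) ℝ) :
    ∃ A ≥ 0, ∀ B : ∀ j, Matrix (κ j) (κ j) ℝ, (∀ j, (B j).PosDef ∧ (Q j - B j).PosSemidef) →
      ∏ j, (B j).det ^ p j ≤ A * (blForm C p B).det ^ t := by
  obtain ⟨c, hc, hcU⟩ :=
    exists_pos_forall_orthogonal_exists_isBLBalanced hC (fun j => (hp j).le) hdim
  set H := ∏ j, ((p j)⁻¹ ^ Fintype.card (κ j)) ^ p j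
  have hH : 0 ≤ H := Finset.prod_nonneg fun j _ => by
    have := hp j
    positivity
  set R := |(blForm C p Q).trace| + 1
  have hR : 0 < R := by positivity
  refine ⟨H * R ^ (∑ j, p j * Fintype.card (κ j) - t * n) / c, by positivity, fun B hB => ?_⟩
  have htrace : (blForm C p B).trace ≤ R :=
    (trace_blForm_le (fun j => (hp j).le) fun j => (hB j).2).trans
      ((le_abs_self _).trans (lt_add_one _).le)
  obtain ⟨U, hU, hUe⟩ := exists_orthogonal_forall_isBLBalanced_prod_det_rpow_mul_blMinor_le hp
    (fun j => (hB j).1.posSemidef) (posDef_blForm hker hp fun j => (hB j).1) hR htrace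
  obtain ⟨e, he, hce⟩ := hcU U hU
  have hnum : 0 ≤ ∏ j, (B j).det ^ p j :=
    Finset.prod_nonneg fun j _ => Real.rpow_nonneg (hB j).1.det_pos.le _
  rw [div_mul_eq_mul_div, le_div_iff₀ hc, mul_assoc]
  exact (mul_le_mul_of_nonneg_left hce hnum).trans (hUe t e he)

end QuotientBound

section BrascampLiebQuotient

variable {ι J : Type*} [Fintype ι] [DecidableEq ι] [Fintype J] {κ : J → Type*}
  [∀ j, Fintype (κ j)] [∀ j, DecidableEq (κ j)] {C : ∀ j, Matrix (κ j) ι ℝ} {p : J → ℝ}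
  {B : ∀ j, Matrix (κ j) (κ j) ℝ}

/-- The square of the functional whose supremum is the Brascamp–Lieb constant. It is `0` on
singular inputs, either because its numerator vanishes or because `x / 0 = 0`. -/
def blQuotient (C : ∀ j, Matrix (κ j) ι ℝ) (p : J → ℝ) (B : ∀ j, Matrix (κ j) (κ j) ℝ) : ℝ :=
  (∏ j, (B j).det ^ p j) / (blForm C p B).det

theorem blQuotient_nonneg (hp : ∀ j, 0 ≤ p j) (hB : ∀ j, (B j).PosSemidef) :
    0 ≤ blQuotient C p B :=
  div_nonneg (Finset.prod_nonneg fun j _ => Real.rpow_nonneg (hB j).det_nonneg _)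
    (posSemidef_blForm hp hB).det_nonneg

theorem blQuotient_pos (hker : ∀ x : ι → ℝ, (∀ j, (C j).mulVec x = 0) → x = 0)
    (hp : ∀ j, 0 < p j) (hB : ∀ j, (B j).PosDef) : 0 < blQuotient C p B :=
  div_pos (Finset.prod_pos fun j _ => Real.rpow_pos_of_pos (hB j).det_pos _)
    (posDef_blForm hker hp hB).det_pos

theorem posDef_of_blQuotient_ne_zero (hp : ∀ j, p j ≠ 0) (hB : ∀ j, (B j).PosSemidef)
    (h : blQuotient C p B ≠ 0) (j : J) : (B j).PosDef := by
  refine (hB j).posDef_iff_det_ne_zero.2 fun hdet => h ?_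
  rw [blQuotient, Finset.prod_eq_zero (Finset.mem_univ j) (by rw [hdet, Real.zero_rpow (hp j)]),
    zero_div]

theorem ofReal_blQuotient (hker : ∀ x : ι → ℝ, (∀ j, (C j).mulVec x = 0) → x = 0)
    (hp : ∀ j, 0 < p j) (hB : ∀ j, (B j).PosDef) :
    ENNReal.ofReal (blQuotient C p B) = (∏ j, ENNReal.ofReal (B j).det ^ p j) /
      ENNReal.ofReal (∑ j, p j • ((C j)ᵀ * B j * C j)).det := by
  rw [blQuotient, ENNReal.ofReal_div_of_pos (posDef_blForm hker hp hB).det_pos,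
    ENNReal.ofReal_prod_of_nonneg fun j _ => Real.rpow_nonneg (hB j).det_pos.le _]
  simp only [ENNReal.ofReal_rpow_of_pos (hB _).det_pos, blForm]

end BrascampLiebQuotient

section Extremizers

variable {n : ℕ} {J : Type*} [Fintype J] {κ : J → Type*} [∀ j, Fintype (κ j)]
  [∀ j, DecidableEq (κ j)] {C : ∀ j, Matrix (κ j) (Fin n) ℝ} {p : J → ℝ} {t : ℝ}
  {Q : ∀ j, Matrix (κ j) (κ j) ℝ}

theorem exists_forall_blQuotient_le (hC : ∀ j, Function.Surjective (C j).mulVec)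
    (hker : ∀ x : Fin n → ℝ, (∀ j, (C j).mulVec x = 0) → x = 0) (hp : ∀ j, 0 < p j)
    (hdim : ∀ V : Submodule ℝ (Fin n → ℝ), t * finrank ℝ V ≤ blRank C p V)
    (Q : ∀ j, Matrix (κ j) (κ j) ℝ) :
    ∃ A : ℝ, ∀ B ∈ psdBox Q, blQuotient C p B ≤ A * (blForm C p B).det ^ (t - 1) := by
  obtain ⟨A, hA, hbound⟩ := exists_forall_prod_det_rpow_le hC hker hp hdim Q
  refine ⟨A, fun B hB => ?_⟩
  have hpsd : ∀ j, (B j).PosSemidef := fun j => (hB j).1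
  by_cases h : blQuotient C p B = 0
  · rw [h]
    exact mul_nonneg hA
      (Real.rpow_nonneg (posSemidef_blForm (fun j => (hp j).le) hpsd).det_nonneg _)
  · have hpd := posDef_of_blQuotient_ne_zero (fun j => (hp j).ne') hpsd h
    have hdet := (posDef_blForm hker hp hpd).det_pos
    rw [blQuotient, div_le_iff₀ hdet, mul_assoc, ← Real.rpow_add_one hdet.ne', sub_add_cancel]
    exact hbound B fun j => ⟨hpd j, (hB j).2⟩

theorem continuousOn_blQuotient (hC : ∀ j, Function.Surjective (C j).mulVec)
    (hker : ∀ x : Fin n → ℝ, (∀ j, (C j).mulVec x = 0) → x = 0) (hp : ∀ j, 0 < p j)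
    (ht : 1 < t) (hdim : ∀ V : Submodule ℝ (Fin n → ℝ), t * finrank ℝ V ≤ blRank C p V)
    (Q : ∀ j, Matrix (κ j) (κ j) ℝ) : ContinuousOn (blQuotient C p) (psdBox Q) := by
  obtain ⟨A, hA⟩ := exists_forall_blQuotient_le hC hker hp hdim Q
  have hform : Continuous fun B => (blForm C p B).det := by
    unfold blForm
    fun_prop
  have hnum : Continuous fun B : ∀ j, Matrix (κ j) (κ j) ℝ => ∏ j, (B j).det ^ p j :=
    continuous_finsetProd _ fun j _ => Continuous.rpow_const (by fun_prop) fun _ => Or.inr (hp j).le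
  intro B _
  by_cases hdet : (blForm C p B).det = 0
  · -- The value `x / 0 = 0` is the limit, because `t > 1` makes the majorant tend to `0`.
    have hmajorant : Continuous fun B => A * (blForm C p B).det ^ (t - 1) :=
      continuous_const.mul (hform.rpow_const fun _ => Or.inr (sub_pos.2 ht).le)
    have hzero : blQuotient C p B = 0 := by rw [blQuotient, hdet, div_zero]
    have hlimit := (hmajorant.tendsto B).mono_left (nhdsWithin_le_nhds (s := psdBox Q))
    rw [hdet, Real.zero_rpow (sub_pos.2 ht).ne', mul_zero] at hlimit
    rw [ContinuousWithinAt, hzero]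
    refine tendsto_of_tendsto_of_tendsto_of_le_of_le' tendsto_const_nhds hlimit ?_ ?_
    all_goals filter_upwards [self_mem_nhdsWithin] with B' hB'
    · exact blQuotient_nonneg (fun j => (hp j).le) fun j => (hB' j).1
    · exact hA B' hB'
  · exact (hnum.continuousAt.div hform.continuousAt hdet).continuousWithinAt

theorem exists_posDef_isMaxOn_blQuotient (hC : ∀ j, Function.Surjective (C j).mulVec)
    (hker : ∀ x : Fin n → ℝ, (∀ j, (C j).mulVec x = 0) → x = 0) (hp : ∀ j, 0 < p j)
    (ht : 1 < t) (hdim : ∀ V : Submodule ℝ (Fin n → ℝ), t * finrank ℝ V ≤ blRank C p V)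
    (hQ : ∀ j, (Q j).PosDef) :
    ∃ B, (∀ j, (B j).PosDef ∧ (Q j - B j).PosSemidef) ∧
      IsMaxOn (blQuotient C p) (psdBox Q) B := by
  have hQbox : Q ∈ psdBox Q := fun j => ⟨(hQ j).posSemidef, by rw [sub_self]; exact .zero⟩
  obtain ⟨B, hB, hmax⟩ := (isCompact_psdBox Q).exists_isMaxOn ⟨Q, hQbox⟩
    (continuousOn_blQuotient hC hker hp ht hdim Q)
  have hpos : 0 < blQuotient C p B := (blQuotient_pos hker hp hQ).trans_le (hmax hQbox)
  exact ⟨B, fun j => ⟨posDef_of_blQuotient_ne_zero (fun i => (hp i).ne') (fun i => (hB i).1)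
    hpos.ne' j, (hB j).2⟩, hmax⟩

end Extremizers

section BLconst

variable {n m : ℕ} {ni : Fin m → ℕ} {C : ∀ i, Matrix (Fin (ni i)) (Fin n) ℝ} {p : Fin m → ℝ}
  {Q : ∀ i, Matrix (Fin (ni i)) (Fin (ni i)) ℝ}

theorem BLconst_le_of_forall_blQuotient_le
    (hker : ∀ x : Fin n → ℝ, (∀ i, (C i).mulVec x = 0) → x = 0) (hp : ∀ i, 0 < p i) {a : ℝ}
    (ha : ∀ B ∈ psdBox Q, blQuotient C p B ≤ a) :
    BLconst C p Q ≤ ENNReal.ofReal a ^ (2 : ℝ)⁻¹ := by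
  refine iSup₂_le fun B hB => ?_
  rw [← ofReal_blQuotient hker hp fun i => (hB i).1]
  exact ENNReal.rpow_le_rpow
    (ENNReal.ofReal_le_ofReal (ha B fun i => ⟨(hB i).1.posSemidef, (hB i).2⟩)) (by positivity)

theorem BLconst_sq_eq_of_isMaxOn
    (hker : ∀ x : Fin n → ℝ, (∀ i, (C i).mulVec x = 0) → x = 0) (hp : ∀ i, 0 < p i)
    {B : ∀ i, Matrix (Fin (ni i)) (Fin (ni i)) ℝ}
    (hB : ∀ i, (B i).PosDef ∧ (Q i - B i).PosSemidef)
    (hmax : IsMaxOn (blQuotient C p) (psdBox Q) B) :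
    BLconst C p Q ^ 2 = ENNReal.ofReal (blQuotient C p B) := by
  have heq : BLconst C p Q = ENNReal.ofReal (blQuotient C p B) ^ (2 : ℝ)⁻¹ := by
    refine le_antisymm (BLconst_le_of_forall_blQuotient_le hker hp hmax) ?_
    rw [ofReal_blQuotient hker hp fun i => (hB i).1]
    exact le_iSup₂_of_le B hB le_rfl
  rw [heq]
  exact ENNReal.rpow_inv_natCast_pow two_ne_zero _

end BLconst

/-- If the dimension conditions hold then the regularized Brascamp–Lieb constant
is finite; if moreover the datum is simple then it is Gaussian-extremizable. -/
theorem BLconst_lt_top_and_gaussian_extremizable_of_simple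
    {n m : ℕ} (hm : 1 ≤ m) {ni : Fin m → ℕ}
    (C : ∀ i, Matrix (Fin (ni i)) (Fin n) ℝ)
    (hCsurj : ∀ i, Function.Surjective (C i).mulVec)
    (hker : ∀ x : Fin n → ℝ, (∀ i, (C i).mulVec x = 0) → x = 0)
    (p : Fin m → ℝ) (hp : ∀ i, 0 < p i)
    (Q : ∀ i, Matrix (Fin (ni i)) (Fin (ni i)) ℝ) (hQ : ∀ i, (Q i).PosDef)
    (hdim : ∀ V : Submodule ℝ (Fin n → ℝ),
      (finrank ℝ V : ℝ) ≤ ∑ j, p j * (finrank ℝ (V.map (C j).mulVecLin) : ℝ)) :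
    BLconst C p Q < ⊤ ∧
      ((∀ V : Submodule ℝ (Fin n → ℝ), V ≠ ⊥ →
          (finrank ℝ V : ℝ) ≠ ∑ j, p j * (finrank ℝ (V.map (C j).mulVecLin) : ℝ)) →
        ∃ B : ∀ i, Matrix (Fin (ni i)) (Fin (ni i)) ℝ,
          (∀ i, (B i).PosDef ∧ (Q i - B i).PosSemidef) ∧
            BLconst C p Q ^ (2 : ℕ) =
              (∏ i, ENNReal.ofReal ((B i).det) ^ p i) /
                ENNReal.ofReal ((∑ i, p i • ((C i)ᵀ * B i * C i)).det)) := by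
  refine ⟨?_, fun hsimple => ?_⟩
  · have hdim₁ : ∀ V : Submodule ℝ (Fin n → ℝ), 1 * (finrank ℝ V : ℝ) ≤ blRank C p V :=
      fun V => (one_mul _).trans_le (hdim V)
    obtain ⟨A, hA⟩ := exists_forall_blQuotient_le hCsurj hker hp hdim₁ Q
    calc BLconst C p Q ≤ ENNReal.ofReal A ^ (2 : ℝ)⁻¹ :=
          BLconst_le_of_forall_blQuotient_le hker hp fun B hB => by simpa using hA B hB
      _ < ⊤ := ENNReal.rpow_lt_top_of_nonneg (by positivity) ENNReal.ofReal_ne_top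
  · obtain ⟨t, ht, hdimt⟩ := exists_one_lt_mul_finrank_le_blRank fun V hV =>
      lt_of_le_of_ne (hdim V) (hsimple V hV)
    obtain ⟨B, hB, hmax⟩ := exists_posDef_isMaxOn_blQuotient hCsurj hker hp ht hdimt hQ
    exact ⟨B, hB, (BLconst_sq_eq_of_isMaxOn hker hp hB hmax).trans
      (ofReal_blQuotient hker hp fun i => (hB i).1)⟩
end
end
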